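/- arXiv:2501.00951 — 6 statements merged into one kernel-verified Lean document; each statement's English description precedes it below -/
import Mathlib

section
/- Let d, t be positive integers, let μ be the normalized Haar probability measure on U(d), and let e₀ ∈ ℂ^d be a fixed unit vector (e.g. the first standard basis vector). Then ∫_{U(d)} ((U e₀)(U e₀)ᴴ)^{⊗t} dμ(U) = ((d−1)!/(d+t−1)!) · Σ_{π ∈ S_t} P_π, where the sum runs over all permutations π of {1,…,t} and P_π is the permutation operator on (ℂ^d)^{⊗t}. (t-th moment of a Haar random pure state equals the normalized projector onto the symmetric subspace, written as a sum of permutation operators.) -/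
open MeasureTheory Matrix
open scoped Kronecker ComplexOrder

attribute [local instance] Matrix.normedAddCommGroup Matrix.normedSpace

/-- The `t`-fold Kronecker (tensor) power of a square matrix, indexed by `Fin t → ι`. -/
noncomputable def tpow {ι : Type*} (M : Matrix ι ι ℂ) (t : ℕ) :
    Matrix (Fin t → ι) (Fin t → ι) ℂ :=
  fun f g => ∏ i, M (f i) (g i)

/-- The permutation operator `P_π` on `(ℂ^d)^{⊗t}`:
`P_π(f,g) = 1` if `f = g ∘ π` and `0` otherwise. -/
noncomputable def permOp (d t : ℕ) (π : Equiv.Perm (Fin t)) :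
    Matrix (Fin t → Fin d) (Fin t → Fin d) ℂ :=
  fun f g => if f = g ∘ π then 1 else 0

noncomputable instance {n : Type*} [Fintype n] [DecidableEq n] :
    MeasurableSpace (Matrix.unitaryGroup n ℂ) := borel _

instance {n : Type*} [Fintype n] [DecidableEq n] :
    BorelSpace (Matrix.unitaryGroup n ℂ) := ⟨rfl⟩

/-! Let `M` be the `t`-th moment and `S = ∑ π, P_π`. Permuting the tensor factors on the left and on
the right independently changes neither `M` nor `S`. Unitary invariance of `μ`, together with
transitivity of `U(d)` on vectors of given norm, forces `⟨a^{⊗t}, M a^{⊗t}⟩ = c ⟨a, a⟩ ^ t`, while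
`⟨a^{⊗t}, S a^{⊗t}⟩ = t! ⟨a, a⟩ ^ t`. A permutation-invariant matrix is determined by these diagonal
values: they are the values of a polynomial in the coordinates of `a` and their conjugates, which
may be treated as independent variables, and its coefficients recover the entries of the matrix.
Hence `M = (c / t!) S`. The scalar is found by taking traces: `tr M = 1`, and `tr P_π` counts the
tuples fixed by `π`, so `tr S` is `t!` times the number of multisets of size `t` by Burnside. -/

open Equiv (Perm)
open scoped Nat Finset

section Burnside

variable {ι κ : Type*} [Fintype κ]

theorem exists_perm_comp_eq [DecidableEq ι] {f g : κ → ι}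
    (h : ∀ a, #{i | f i = a} = #{i | g i = a}) : ∃ σ : Perm κ, g ∘ σ = f := by
  have e : ∀ a, {i // f i = a} ≃ {i // g i = a} := fun a =>
    Fintype.equivOfCardEq (by simpa only [Fintype.card_subtype] using h a)
  exact ⟨Equiv.ofFiberEquiv e, funext fun i => Equiv.ofFiberEquiv_map e i⟩

/-- The multiset of values of a tuple, i.e. the tuple up to reordering. -/
def symOfFun (f : κ → ι) : Sym ι (Fintype.card κ) :=
  Sym.mk (Finset.univ.val.map f) (by simp)

theorem symOfFun_surjective : Function.Surjective (symOfFun : (κ → ι) → _) := by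
  classical
  rintro ⟨s, hs⟩
  let e : κ ≃ s := Fintype.equivOfCardEq (by rw [Multiset.card_coe, hs])
  refine ⟨fun i => (e i).1, Sym.ext ?_⟩
  change Finset.univ.val.map ((fun x : s => x.1) ∘ e) = s
  rw [← Multiset.map_map, Multiset.map_univ_val_equiv, Multiset.map_univ_coe]

theorem symOfFun_eq_iff {f g : κ → ι} :
    symOfFun f = symOfFun g ↔ ∃ σ : Perm κ, g ∘ σ = f := by
  classical
  constructor
  · intro h
    refine exists_perm_comp_eq fun a => ?_
    simpa [symOfFun, Multiset.count_map, eq_comm, Finset.card] using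
      congr_arg (fun s : Sym ι _ => Multiset.count a s) h
  · rintro ⟨σ, rfl⟩
    ext1
    change Finset.univ.val.map (g ∘ σ) = Finset.univ.val.map g
    rw [← Multiset.map_map, Multiset.map_univ_val_equiv]

theorem orbitRel_perm_eq_ker_symOfFun :
    MulAction.orbitRel (Perm κ)ᵈᵐᵃ (κ → ι) = Setoid.ker symOfFun := by
  ext f g
  rw [MulAction.orbitRel_apply, Setoid.ker_def, symOfFun_eq_iff]
  exact DomMulAct.mk.symm.exists_congr_left

theorem sum_card_comp_perm_eq (ι κ : Type*) [Fintype ι] [DecidableEq ι] [Fintype κ]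
    [DecidableEq κ] :
    ∑ σ : Perm κ, #{f : κ → ι | f ∘ σ = f} =
      (Fintype.card ι).ascFactorial (Fintype.card κ) := by
  classical
  let : Fintype (Perm κ)ᵈᵐᵃ := Fintype.ofEquiv _ DomMulAct.mk
  let e : MulAction.orbitRel.Quotient (Perm κ)ᵈᵐᵃ (κ → ι) ≃ Sym ι (Fintype.card κ) :=
    (Quotient.congrRight fun f g => by rw [orbitRel_perm_eq_ker_symOfFun]).trans
      (Setoid.quotientKerEquivOfSurjective symOfFun symOfFun_surjective)
  have burnside := MulAction.sum_card_fixedBy_eq_card_orbits_mul_card_group (Perm κ)ᵈᵐᵃ (κ → ι)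
  rw [Fintype.card_congr e, Sym.card_sym_eq_choose, ← Fintype.card_congr DomMulAct.mk,
    Fintype.card_perm, mul_comm, ← Nat.ascFactorial_eq_factorial_mul_choose'] at burnside
  rw [← burnside, ← DomMulAct.mk.sum_comp]
  simp only [← Fintype.card_subtype]
  exact Finset.sum_congr rfl fun σ _ => Fintype.card_congr (Equiv.refl _)

end Burnside

section VecTpow

variable {ι κ R : Type*} [Fintype κ]

/-- The tensor power `a^{⊗κ}` of a vector, with coordinates indexed by functions `κ → ι`. -/
def vecTpow (κ : Type*) [Fintype κ] [CommMonoid R] (a : ι → R) : (κ → ι) → R :=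
  fun f => ∏ i, a (f i)

theorem vecTpow_comp_perm [CommMonoid R] (a : ι → R) (f : κ → ι) (σ : Perm κ) :
    vecTpow κ a (f ∘ σ) = vecTpow κ a f :=
  Equiv.prod_comp σ fun i => a (f i)

theorem vecTpow_dotProduct_vecTpow [CommSemiring R] [Fintype ι] [DecidableEq κ] (a b : ι → R) :
    vecTpow κ a ⬝ᵥ vecTpow κ b = (a ⬝ᵥ b) ^ Fintype.card κ := by
  simp only [dotProduct, vecTpow, ← Finset.prod_mul_distrib]
  rw [← Fintype.prod_sum (fun _ : κ => fun j => a j * b j), Finset.prod_const, Finset.card_univ]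

end VecTpow

section Polarization

variable {ι κ R : Type*}

/-- Invariance under independent permutations of the tensor factors on the left and right: `M`, as
an operator on `(R^ι)^{⊗κ}`, takes values in the symmetric tensors and depends only on the
symmetrization of its argument. -/
def IsPermInvariant (M : Matrix (κ → ι) (κ → ι) R) : Prop :=
  ∀ (σ τ : Perm κ) (f g : κ → ι), M (f ∘ σ) (g ∘ τ) = M f g

theorem IsPermInvariant.sub [Sub R] {M N : Matrix (κ → ι) (κ → ι) R} (hM : IsPermInvariant M)
    (hN : IsPermInvariant N) : IsPermInvariant (M - N) := fun σ τ f g => by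
  rw [Matrix.sub_apply, Matrix.sub_apply, hM, hN]

theorem IsPermInvariant.smul {S : Type*} [SMul S R] {M : Matrix (κ → ι) (κ → ι) R}
    (hM : IsPermInvariant M) (c : S) : IsPermInvariant (c • M) := fun σ τ f g => by
  rw [Matrix.smul_apply, Matrix.smul_apply, hM]

-- The linear substitution `z̄ = x - iy`, `z = x + iy` is invertible, and in the variables `x, y`
-- the hypothesis says that the polynomial vanishes at all real points.
theorem mvPolynomial_eq_zero_of_eval_conj {p : MvPolynomial (ι ⊕ ι) ℂ}
    (hp : ∀ a : ι → ℂ, MvPolynomial.eval (Sum.elim (star a) a) p = 0) : p = 0 := by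
  let q : MvPolynomial (ι ⊕ ι) ℂ := MvPolynomial.bind₁ (Sum.elim
    (fun i => MvPolynomial.X (.inl i) - MvPolynomial.C Complex.I * MvPolynomial.X (.inr i))
    (fun i => MvPolynomial.X (.inl i) + MvPolynomial.C Complex.I * MvPolynomial.X (.inr i))) p
  have eval_q (z : ι ⊕ ι → ℂ) : MvPolynomial.eval z q = MvPolynomial.eval (Sum.elim
      (fun i => z (.inl i) - Complex.I * z (.inr i))
      (fun i => z (.inl i) + Complex.I * z (.inr i))) p := by
    simp only [q, MvPolynomial.eval, MvPolynomial.eval₂Hom_bind₁]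
    congr 2
    ext (i | i) <;> simp
  have q_eq_zero : q = 0 := by
    refine MvPolynomial.funext_set (fun _ => Set.range Complex.ofReal)
      (fun _ => Set.infinite_range_of_injective Complex.ofReal_injective) fun z hz => ?_
    choose x hx using fun i => hz i (Set.mem_univ i)
    rw [eval_q, map_zero, ← hp fun i => z (.inl i) + Complex.I * z (.inr i)]
    congr 3
    ext i
    simp [← hx, sub_eq_add_neg]
  refine MvPolynomial.funext fun z => ?_
  have eval_p := eval_q (Sum.elim (fun i => (z (.inl i) + z (.inr i)) / 2)
    (fun i => (z (.inr i) - z (.inl i)) / (2 * Complex.I)))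
  rw [q_eq_zero, map_zero] at eval_p
  rw [map_zero, eval_p]
  congr 2
  ext (i | i) <;> simp <;> field_simp <;> ring

variable [Fintype κ]

/-- The exponent of the monomial `∏ i, z̄_{f i} · ∏ i, z_{g i}`, where the left summand of `ι ⊕ ι`
indexes the variables `z̄` and the right summand the variables `z`. -/
noncomputable def biExponent (f g : κ → ι) : ι ⊕ ι →₀ ℕ :=
  ∑ i, Finsupp.single (.inl (f i)) 1 + ∑ i, Finsupp.single (.inr (g i)) 1

theorem exists_perm_of_biExponent_eq {f g f' g' : κ → ι}
    (h : biExponent f g = biExponent f' g') :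
    (∃ σ : Perm κ, f' ∘ σ = f) ∧ ∃ τ : Perm κ, g' ∘ τ = g := by
  classical
  constructor <;> refine exists_perm_comp_eq fun a => ?_
  · simpa [biExponent, Finsupp.single_apply] using DFunLike.congr_fun h (.inl a)
  · simpa [biExponent, Finsupp.single_apply] using DFunLike.congr_fun h (.inr a)

theorem eval_monomial_biExponent [CommSemiring R] (f g : κ → ι) (c : R) (u v : ι → R) :
    MvPolynomial.eval (Sum.elim u v) (MvPolynomial.monomial (biExponent f g) c) =
      vecTpow κ u f * (c * vecTpow κ v g) := by
  classical
  rw [MvPolynomial.eval_monomial, biExponent, Finsupp.prod_add_index' (by simp)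
    (fun _ _ _ => pow_add _ _ _), ← Finsupp.prod_finsetSum_index (by simp)
    (fun _ _ _ => pow_add _ _ _), ← Finsupp.prod_finsetSum_index (by simp)
    (fun _ _ _ => pow_add _ _ _)]
  simp only [Finsupp.prod_single_index, pow_zero, pow_one, Sum.elim_inl, Sum.elim_inr, vecTpow]
  ring

variable [Fintype ι] [DecidableEq κ]

/-- The form `(u, v) ↦ u^{⊗κ} ⬝ᵥ M *ᵥ v^{⊗κ}` as a polynomial in the coordinates of `u` (left
summand of `ι ⊕ ι`) and `v` (right summand). -/
noncomputable def biPolynomial [CommSemiring R] (M : Matrix (κ → ι) (κ → ι) R) :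
    MvPolynomial (ι ⊕ ι) R :=
  ∑ f, ∑ g, MvPolynomial.monomial (biExponent f g) (M f g)

theorem eval_biPolynomial [CommSemiring R] (M : Matrix (κ → ι) (κ → ι) R) (u v : ι → R) :
    MvPolynomial.eval (Sum.elim u v) (biPolynomial M) =
      vecTpow κ u ⬝ᵥ M *ᵥ vecTpow κ v := by
  simp only [biPolynomial, map_sum, eval_monomial_biExponent, dotProduct, mulVec, Finset.mul_sum]

theorem IsPermInvariant.coeff_biPolynomial [DecidableEq ι] [CommSemiring R]
    {M : Matrix (κ → ι) (κ → ι) R} (hM : IsPermInvariant M) (f g : κ → ι) :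
    (biPolynomial M).coeff (biExponent f g) =
      #{p : (κ → ι) × (κ → ι) | biExponent p.1 p.2 = biExponent f g} * M f g := by
  have entry_eq (p : (κ → ι) × (κ → ι)) (hp : biExponent p.1 p.2 = biExponent f g) :
      M p.1 p.2 = M f g := by
    obtain ⟨⟨σ, hσ⟩, τ, hτ⟩ := exists_perm_of_biExponent_eq hp
    rw [← hσ, ← hτ, hM]
  simp_rw [biPolynomial, MvPolynomial.coeff_sum, MvPolynomial.coeff_monomial]
  rw [← Fintype.sum_prod_type', ← Finset.sum_filter, Finset.sum_congr rfl, Finset.sum_const,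
    nsmul_eq_mul]
  exact fun p hp => entry_eq p (Finset.mem_filter_univ p |>.mp hp)

theorem IsPermInvariant.eq_zero_of_form {M : Matrix (κ → ι) (κ → ι) ℂ} (hM : IsPermInvariant M)
    (h : ∀ a : ι → ℂ, vecTpow κ (star a) ⬝ᵥ M *ᵥ vecTpow κ a = 0) : M = 0 := by
  classical
  have polynomial_eq_zero : biPolynomial M = 0 := mvPolynomial_eq_zero_of_eval_conj fun a => by
    rw [eval_biPolynomial, h]
  ext f g
  have coeff_eq := hM.coeff_biPolynomial f g
  rw [polynomial_eq_zero, MvPolynomial.coeff_zero, eq_comm, mul_eq_zero, Nat.cast_eq_zero,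
    Finset.card_eq_zero] at coeff_eq
  exact coeff_eq.resolve_left (Finset.Nonempty.ne_empty ⟨(f, g), by simp⟩)

end Polarization

section PermOp

variable (d t : ℕ)

theorem trace_permOp (π : Perm (Fin t)) :
    (permOp d t π).trace = #{f : Fin t → Fin d | f ∘ π = f} := by
  simp [Matrix.trace, permOp, eq_comm]

theorem trace_sum_permOp : (∑ π, permOp d t π).trace = (d.ascFactorial t : ℂ) := by
  simp_rw [trace_sum, trace_permOp, ← Nat.cast_sum]
  rw [sum_card_comp_perm_eq, Fintype.card_fin, Fintype.card_fin]

variable {d t}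

theorem permOp_mulVec_vecTpow (π : Perm (Fin t)) (a : Fin d → ℂ) :
    permOp d t π *ᵥ vecTpow (Fin t) a = vecTpow (Fin t) a := by
  ext f
  have comp_eq_iff (g : Fin t → Fin d) : f = g ∘ π ↔ f ∘ π.symm = g :=
    (Equiv.comp_symm_eq π g f).symm
  simp [mulVec, dotProduct, permOp, comp_eq_iff, vecTpow_comp_perm]

theorem dotProduct_sum_permOp_mulVec (a b : Fin d → ℂ) :
    vecTpow (Fin t) b ⬝ᵥ (∑ π, permOp d t π) *ᵥ vecTpow (Fin t) a = t ! * (b ⬝ᵥ a) ^ t := by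
  simp_rw [sum_mulVec, permOp_mulVec_vecTpow]
  rw [Finset.sum_const, Finset.card_univ, Fintype.card_perm, dotProduct_smul,
    vecTpow_dotProduct_vecTpow, Fintype.card_fin, nsmul_eq_mul]

theorem permOp_comp_comp (π σ τ : Perm (Fin t)) (f g : Fin t → Fin d) :
    permOp d t π (f ∘ σ) (g ∘ τ) = permOp d t (τ * π * σ⁻¹) f g := by
  have comp_eq_iff : f ∘ σ = (g ∘ τ) ∘ π ↔ f = g ∘ (τ * π * σ⁻¹ : Perm (Fin t)) :=
    (Equiv.eq_comp_symm σ f _).symm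
  simp only [permOp, comp_eq_iff]

theorem isPermInvariant_sum_permOp : IsPermInvariant (∑ π, permOp d t π) := by
  intro σ τ f g
  simp only [Matrix.sum_apply, permOp_comp_comp]
  exact ((Equiv.mulLeft τ).trans (Equiv.mulRight σ⁻¹)).sum_comp fun π => permOp d t π f g

end PermOp

section Unitary

variable {ι 𝕜 : Type*} [Fintype ι] [DecidableEq ι] [RCLike 𝕜]

instance : CompactSpace (unitaryGroup ι 𝕜) := by
  have closed : IsClosed (unitaryGroup ι 𝕜 : Set (Matrix ι ι 𝕜)) := isClosed_unitary
  refine isCompact_iff_compactSpace.mp (Metric.isCompact_of_isClosed_isBounded closed ?_)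
  exact isBounded_iff_forall_norm_le.mpr ⟨1, fun U hU => entrywise_sup_norm_bound_of_unitary hU⟩

theorem exists_unitary_mulVec_single_eq (i : ι) (a : ι → 𝕜) :
    ∃ (V : unitaryGroup ι 𝕜) (z : 𝕜), (V : Matrix ι ι 𝕜) *ᵥ Pi.single i z = a := by
  rcases eq_or_ne a 0 with rfl | ha
  · exact ⟨1, 0, by simp⟩
  let v : EuclideanSpace 𝕜 ι := WithLp.toLp 2 a
  have hv : v ≠ 0 := by simpa [v] using ha
  let u : EuclideanSpace 𝕜 ι := (‖v‖⁻¹ : 𝕜) • v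
  have hu : Orthonormal 𝕜 (Set.domRestrict {i} fun _ : ι => u) :=
    ⟨fun _ => norm_smul_inv_norm hv, fun j k hjk => (hjk (Subsingleton.elim j k)).elim⟩
  obtain ⟨b, hb⟩ := hu.exists_orthonormalBasis_extension_of_card_eq finrank_euclideanSpace
  refine ⟨⟨_, (EuclideanSpace.basisFun ι 𝕜).toMatrix_orthonormalBasis_mem_unitary b⟩, ‖v‖, ?_⟩
  ext j
  have norm_ne_zero : (‖v‖ : 𝕜) ≠ 0 := by simpa using hv
  simp [hb i rfl, u, v, Module.Basis.toMatrix_apply, norm_ne_zero, mul_comm]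

theorem star_mulVec_dotProduct_mulVec (U : unitaryGroup ι 𝕜) (a b : ι → 𝕜) :
    star ((U : Matrix ι ι 𝕜) *ᵥ a) ⬝ᵥ (U : Matrix ι ι 𝕜) *ᵥ b = star a ⬝ᵥ b := by
  rw [star_mulVec, ← dotProduct_mulVec, mulVec_mulVec, ← star_eq_conjTranspose,
    Unitary.coe_star_mul_self, one_mulVec]

end Unitary

section Tpow

variable {ι : Type*} (t : ℕ)

theorem tpow_vecMulVec (a b : ι → ℂ) :
    tpow (vecMulVec a b) t = vecMulVec (vecTpow (Fin t) a) (vecTpow (Fin t) b) := by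
  ext f g
  simp [tpow, vecMulVec_apply, vecTpow, Finset.prod_mul_distrib]

theorem continuous_tpow : Continuous fun M : Matrix ι ι ℂ => tpow M t := by
  unfold tpow
  fun_prop

end Tpow

section Haar

variable {ι : Type*} [Fintype ι] [DecidableEq ι]

/-- The `t`-th moment operator of the random pure state `U e`, where `U` has law `μ`. -/
noncomputable def stateMoment (μ : Measure (unitaryGroup ι ℂ)) (e : ι → ℂ) (t : ℕ) :
    Matrix (Fin t → ι) (Fin t → ι) ℂ :=
  ∫ U, tpow (vecMulVec ((U : Matrix ι ι ℂ) *ᵥ e) (star ((U : Matrix ι ι ℂ) *ᵥ e))) t ∂μ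

variable (μ : Measure (unitaryGroup ι ℂ)) (e : ι → ℂ) (t : ℕ)

theorem map_stateMoment [IsFiniteMeasure μ] {E : Type*} [NormedAddCommGroup E] [NormedSpace ℂ E]
    [CompleteSpace E] (L : Matrix (Fin t → ι) (Fin t → ι) ℂ →ₗ[ℂ] E) :
    L (stateMoment μ e t) =
      ∫ U, L (vecMulVec (vecTpow (Fin t) ((U : Matrix ι ι ℂ) *ᵥ e))
        (vecTpow (Fin t) (star ((U : Matrix ι ι ℂ) *ᵥ e)))) ∂μ := by
  simp_rw [stateMoment, tpow_vecMulVec]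
  refine (L.toContinuousLinearMap.integral_comp_comm ?_).symm
  simp_rw [← tpow_vecMulVec]
  refine Continuous.integrable_of_hasCompactSupport ?_ (.of_compactSpace _)
  exact (continuous_tpow t).comp (by fun_prop)

theorem isPermInvariant_stateMoment [IsFiniteMeasure μ] : IsPermInvariant (stateMoment μ e t) := by
  intro σ τ f g
  have apply_eq f g := map_stateMoment μ e t (entryLinearMap ℂ ℂ f g)
  simp only [entryLinearMap_apply, vecMulVec_apply] at apply_eq
  simp only [apply_eq, vecTpow_comp_perm]

theorem trace_stateMoment [IsProbabilityMeasure μ] {e : ι → ℂ} (he : star e ⬝ᵥ e = 1) :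
    (stateMoment μ e t).trace = 1 := by
  have trace_eq := map_stateMoment μ e t (traceLinearMap _ ℂ ℂ)
  simpa [trace_vecMulVec, vecTpow_dotProduct_vecTpow, dotProduct_comm _ (star _),
    star_mulVec_dotProduct_mulVec, he] using trace_eq

theorem stateMoment_form [IsFiniteMeasure μ] (a : ι → ℂ) :
    vecTpow (Fin t) (star a) ⬝ᵥ stateMoment μ e t *ᵥ vecTpow (Fin t) a =
      ∫ U, (‖star a ⬝ᵥ (U : Matrix ι ι ℂ) *ᵥ e‖ ^ 2 : ℂ) ^ t ∂μ := by
  refine (map_stateMoment μ e t (dotProductBilin ℂ ℂ (vecTpow (Fin t) (star a)) ∘ₗ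
    (mulVecBilin ℂ ℂ).flip (vecTpow (Fin t) a))).trans (integral_congr_ae (.of_forall fun U => ?_))
  set x := (U : Matrix ι ι ℂ) *ᵥ e
  change vecTpow (Fin t) (star a) ⬝ᵥ
    vecMulVec (vecTpow (Fin t) x) (vecTpow (Fin t) (star x)) *ᵥ vecTpow (Fin t) a = _
  rw [vecMulVec_mulVec, dotProduct_smul, vecTpow_dotProduct_vecTpow, vecTpow_dotProduct_vecTpow,
    Fintype.card_fin, op_smul_eq_mul, ← mul_pow, star_dotProduct x, Complex.star_def,
    Complex.mul_conj']

theorem integral_star_mulVec_dotProduct [μ.IsMulLeftInvariant] {E : Type*} [NormedAddCommGroup E]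
    [NormedSpace ℝ E] (V : unitaryGroup ι ℂ) (a : ι → ℂ) (F : ℂ → E) :
    ∫ U, F (star ((V : Matrix ι ι ℂ) *ᵥ a) ⬝ᵥ (U : Matrix ι ι ℂ) *ᵥ e) ∂μ =
      ∫ U, F (star a ⬝ᵥ (U : Matrix ι ι ℂ) *ᵥ e) ∂μ := by
  rw [← integral_mul_left_eq_self _ V]
  simp_rw [Submonoid.coe_mul, ← mulVec_mulVec, star_mulVec_dotProduct_mulVec]

theorem exists_stateMoment_form_eq [Nonempty ι] [IsFiniteMeasure μ] [μ.IsMulLeftInvariant] :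
    ∃ c : ℂ, ∀ a : ι → ℂ, vecTpow (Fin t) (star a) ⬝ᵥ stateMoment μ e t *ᵥ vecTpow (Fin t) a =
      c * (star a ⬝ᵥ a) ^ t := by
  obtain ⟨i⟩ := ‹Nonempty ι›
  refine ⟨∫ U, (‖((U : Matrix ι ι ℂ) *ᵥ e) i‖ ^ 2 : ℂ) ^ t ∂μ, fun a => ?_⟩
  obtain ⟨V, z, rfl⟩ := exists_unitary_mulVec_single_eq i a
  rw [stateMoment_form, integral_star_mulVec_dotProduct μ e V _ fun z => (‖z‖ ^ 2 : ℂ) ^ t,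
    star_mulVec_dotProduct_mulVec, ← integral_mul_const]
  have norm_sq_eq (y : ι → ℂ) : (‖star (Pi.single i z) ⬝ᵥ y‖ ^ 2 : ℂ) =
      ‖y i‖ ^ 2 * (star (Pi.single i z) ⬝ᵥ Pi.single i z) := by
    simp [mul_pow, Complex.mul_conj', mul_comm]
  simp_rw [norm_sq_eq, mul_pow]

end Haar

theorem haar_state_moment_general (d t : ℕ) (μ : Measure (unitaryGroup (Fin d) ℂ))
    [μ.IsMulLeftInvariant] [IsProbabilityMeasure μ] (e : Fin d → ℂ) (he : star e ⬝ᵥ e = 1) :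
    (∫ U, tpow (vecMulVec ((U : Matrix (Fin d) (Fin d) ℂ) *ᵥ e)
        (star ((U : Matrix (Fin d) (Fin d) ℂ) *ᵥ e))) t ∂μ)
      = (((d - 1).factorial : ℂ) / ((d + t - 1).factorial : ℂ)) • ∑ π, permOp d t π := by
  have hd : 0 < d := Nat.pos_of_ne_zero (by rintro rfl; simp [dotProduct] at he)
  have : Nonempty (Fin d) := ⟨0, hd⟩
  obtain ⟨c, hc⟩ := exists_stateMoment_form_eq μ e t
  have moment_eq : stateMoment μ e t = (c / t !) • ∑ π, permOp d t π := by
    refine sub_eq_zero.mp (((isPermInvariant_stateMoment μ e t).sub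
      (isPermInvariant_sum_permOp.smul _)).eq_zero_of_form fun a => ?_)
    rw [sub_mulVec, dotProduct_sub, hc, smul_mulVec, dotProduct_smul,
      dotProduct_sum_permOp_mulVec, smul_eq_mul, ← mul_assoc, div_mul_cancel₀, sub_self]
    exact mod_cast t.factorial_ne_zero
  have trace_eq : c / t ! * d.ascFactorial t = 1 := by
    rw [← trace_stateMoment μ t he, moment_eq, trace_smul, trace_sum_permOp, smul_eq_mul]
  have factorial_eq : ((d - 1)! * d.ascFactorial t : ℂ) = (d + t - 1)! :=
    mod_cast Nat.factorial_mul_ascFactorial' d t hd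
  have coeff_eq : c / t ! = (d - 1)! / (d + t - 1)! := by
    rw [eq_div_iff (mod_cast (d + t - 1).factorial_ne_zero), ← factorial_eq, mul_left_comm,
      trace_eq, mul_one]
  rw [← coeff_eq]
  exact moment_eq

/-- **Moments of a Haar random pure state.**
The `t`-th moment of a Haar random pure state equals the normalized projector onto the
symmetric subspace, written as a sum of permutation operators:
`∫ ((Ue₀)(Ue₀)ᴴ)^{⊗t} dμ(U) = ((d−1)!/(d+t−1)!) · Σ_{π ∈ S_t} P_π`. -/
theorem haar_state_moment (d t : ℕ) (hd : 0 < d) (ht : 0 < t)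
    (μ : Measure (Matrix.unitaryGroup (Fin d) ℂ))
    [μ.IsHaarMeasure] [IsProbabilityMeasure μ]
    (e₀ : Fin d → ℂ) (he₀ : e₀ = fun i => if i.val = 0 then (1 : ℂ) else 0) :
    (∫ U, tpow (Matrix.vecMulVec ((U : Matrix (Fin d) (Fin d) ℂ) *ᵥ e₀)
        (star ((U : Matrix (Fin d) (Fin d) ℂ) *ᵥ e₀))) t ∂μ)
      = (((d - 1).factorial : ℂ) / ((d + t - 1).factorial : ℂ)) •
          ∑ π : Equiv.Perm (Fin t), permOp d t π := by
  obtain ⟨n, rfl⟩ := Nat.exists_eq_add_one.mpr hd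
  exact haar_state_moment_general (n + 1) t μ e₀ (by simp [he₀, dotProduct])
end

section
/- Let d, t be positive integers with t² ≤ d. Then d^t · (d−t)! / d! ≤ 1 + t²/d (as real numbers). Equivalently, ∏_{i=0}^{t−1} d/(d−i) ≤ 1 + t²/d. -/
/-!
Dividing the falling factorial `d! / (d - t)!` by `d ^ t` gives `∏_{i < t} (1 - i / d)`, so both
quantities to be bounded are the inverse of this product. By the Weierstrass product inequality it
is at least `1 - s` with `s = ∑_{i < t} i / d = t (t - 1) / (2 d)`. Since `s ≤ 1 / 2`, the inverse
is at most `(1 - s)⁻¹ ≤ 1 + 2 s = 1 + t (t - 1) / d`.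
-/

section OrderedRing

variable {R : Type*} [CommRing R] [LinearOrder R] [IsStrictOrderedRing R]

theorem one_sub_sum_le_prod_one_sub {ι : Type*} (s : Finset ι) {f : ι → R}
    (hf₀ : ∀ i ∈ s, 0 ≤ f i) (hf₁ : ∀ i ∈ s, f i ≤ 1) :
    1 - ∑ i ∈ s, f i ≤ ∏ i ∈ s, (1 - f i) := by
  induction s using Finset.cons_induction with
  | empty => simp
  | cons a s ha ih =>
    rw [Finset.forall_mem_cons] at hf₀ hf₁
    have hsum : 0 ≤ ∑ i ∈ s, f i := Finset.sum_nonneg hf₀.2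
    rw [Finset.sum_cons, Finset.prod_cons]
    calc
      1 - (f a + ∑ i ∈ s, f i) ≤ (1 - f a) * (1 - ∑ i ∈ s, f i) := by
        linarith [mul_nonneg hf₀.1 hsum]
      _ ≤ (1 - f a) * ∏ i ∈ s, (1 - f i) :=
        mul_le_mul_of_nonneg_left (ih hf₀.2 hf₁.2) (sub_nonneg.2 hf₁.1)

theorem sub_one_lt_of_mul_sub_one_le {a x : R} (hx : 0 < x) (h : a * (a - 1) ≤ x) :
    a - 1 < x := by
  by_contra! hxa
  nlinarith

end OrderedRing

theorem sum_range_natCast_eq {K : Type*} [Field K] [CharZero K] (n : ℕ) :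
    ∑ i ∈ Finset.range n, (i : K) = n * (n - 1) / 2 := by
  rw [← Nat.cast_sum, Finset.sum_range_id, ← Nat.choose_two_right, Nat.cast_choose_two]

theorem pow_mul_factorial_div_factorial_eq_prod {K : Type*} [Field K] [CharZero K] {d t : ℕ}
    (htd : t ≤ d) :
    (d : K) ^ t * ((d - t).factorial : K) / (d.factorial : K) =
      ∏ i ∈ Finset.range t, (d : K) / ((d : K) - (i : K)) := by
  have hfact : ((d - t).factorial : K) ≠ 0 := Nat.cast_ne_zero.2 (d - t).factorial_ne_zero
  rw [Finset.prod_div_distrib, Finset.prod_const, Finset.card_range,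
    Finset.prod_range_natCast_sub, ← Nat.descFactorial_eq_prod_range,
    ← Nat.factorial_mul_descFactorial htd, Nat.cast_mul, mul_comm, mul_div_mul_left _ _ hfact]

section OrderedField

variable {K : Type*} [Field K] [LinearOrder K] [IsStrictOrderedRing K]

theorem inv_one_sub_le_one_add_two_mul {s : K} (hs₀ : 0 ≤ s) (hs : s ≤ 1 / 2) :
    (1 - s)⁻¹ ≤ 1 + 2 * s := by
  rw [inv_le_iff_one_le_mul₀ (by linarith)]
  nlinarith

theorem inv_prod_one_sub_le {ι : Type*} (s : Finset ι) {f : ι → K} (hf : ∀ i ∈ s, 0 ≤ f i)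
    (hsum : ∑ i ∈ s, f i ≤ 1 / 2) :
    (∏ i ∈ s, (1 - f i))⁻¹ ≤ 1 + 2 * ∑ i ∈ s, f i := by
  have hf₁ : ∀ i ∈ s, f i ≤ 1 := fun i hi ↦ by
    linarith [Finset.single_le_sum hf hi]
  calc
    (∏ i ∈ s, (1 - f i))⁻¹ ≤ (1 - ∑ i ∈ s, f i)⁻¹ :=
      inv_anti₀ (by linarith) (one_sub_sum_le_prod_one_sub s hf hf₁)
    _ ≤ 1 + 2 * ∑ i ∈ s, f i := inv_one_sub_le_one_add_two_mul (Finset.sum_nonneg hf) hsum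

theorem prod_range_div_sub_le {x : K} (hx : 0 < x) {t : ℕ} (h : (t : K) * (t - 1) ≤ x) :
    ∏ i ∈ Finset.range t, x / (x - (i : K)) ≤ 1 + (t : K) * (t - 1) / x := by
  have hsum : ∑ i ∈ Finset.range t, (i : K) / x = t * (t - 1) / x / 2 := by
    rw [← Finset.sum_div, sum_range_natCast_eq, div_right_comm]
  have hhalf : ∑ i ∈ Finset.range t, (i : K) / x ≤ 1 / 2 := by
    rw [hsum]
    gcongr
    exact (div_le_one hx).2 h
  calc
    ∏ i ∈ Finset.range t, x / (x - (i : K))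
      = (∏ i ∈ Finset.range t, (1 - (i : K) / x))⁻¹ := by
        simp only [one_sub_div hx.ne', ← Finset.prod_inv_distrib, inv_div]
    _ ≤ 1 + 2 * ∑ i ∈ Finset.range t, (i : K) / x :=
        inv_prod_one_sub_le _ (fun i _ ↦ by positivity) hhalf
    _ = 1 + (t : K) * (t - 1) / x := by rw [hsum, mul_div_cancel₀ _ two_ne_zero]

theorem weingarten_sum_bound_general {d t : ℕ} (hd : 0 < d) (h : (t : K) * (t - 1) ≤ d) :
    (d : K) ^ t * ((d - t).factorial : K) / (d.factorial : K) ≤ 1 + (t : K) * (t - 1) / d ∧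
    ∏ i ∈ Finset.range t, (d : K) / ((d : K) - (i : K)) ≤ 1 + (t : K) * (t - 1) / d := by
  have hd' : (0 : K) < d := Nat.cast_pos.2 hd
  have htd : t ≤ d := by
    have hlt : (t : K) < d + 1 := sub_lt_iff_lt_add.1 (sub_one_lt_of_mul_sub_one_le hd' h)
    exact Nat.lt_succ_iff.1 (by exact_mod_cast hlt)
  rw [pow_mul_factorial_div_factorial_eq_prod htd, and_self_iff]
  exact prod_range_div_sub_le hd' h

end OrderedField

/-- **Weingarten sum bound.**
For positive integers `d, t` with `t² ≤ d`, one has `d^t·(d−t)!/d! ≤ 1 + t²/d`,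
equivalently `∏_{i=0}^{t−1} d/(d−i) ≤ 1 + t²/d`. -/
theorem weingarten_sum_bound (d t : ℕ) (hd : 0 < d) (ht : 0 < t) (h : t ^ 2 ≤ d) :
    (d : ℝ) ^ t * ((d - t).factorial : ℝ) / (d.factorial : ℝ) ≤ 1 + (t : ℝ) ^ 2 / d ∧
    (∏ i ∈ Finset.range t, (d : ℝ) / ((d : ℝ) - (i : ℝ))) ≤ 1 + (t : ℝ) ^ 2 / d := by
  have hle : (t : ℝ) * (t - 1) ≤ (t : ℝ) ^ 2 := by linarith [t.cast_nonneg (α := ℝ)]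
  have hbound : 1 + (t : ℝ) * (t - 1) / d ≤ 1 + (t : ℝ) ^ 2 / d := by gcongr
  exact (weingarten_sum_bound_general hd (hle.trans (by exact_mod_cast h))).imp
    (·.trans hbound) (·.trans hbound)
end

section
/- Let N and t be positive integers and set s = t(t−1)/(2N) (a real number). Then 1 − s ≤ N^t·(N−1)!/(N+t−1)! ≤ 1 − s + s². Equivalently, 1 − s ≤ ∏_{i=1}^{t−1} (1 + i/N)^{−1} ≤ 1 − s + s². -/
/-!
The constant is `P⁻¹`, where `P = ∏_{i<t} (1 + i/N)` and `∑_{i<t} i/N = s`. Expanding `P` gives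
`1 + s ≤ P`, and since `(1 - a - x) * (1 + x) ≤ 1 - a` for `a, x ≥ 0`, multiplying in the factors
one at a time gives `(1 - s) * P ≤ 1`. Hence `1 - s ≤ P⁻¹ ≤ (1 + s)⁻¹ ≤ 1 - s + s²`.
-/

section ProductBounds

variable {ι R : Type*} {s : Finset ι} {f : ι → R}

theorem one_add_sum_le_prod_one_add [CommSemiring R] [PartialOrder R] [IsOrderedRing R]
    (hf : ∀ i ∈ s, 0 ≤ f i) : 1 + ∑ i ∈ s, f i ≤ ∏ i ∈ s, (1 + f i) := by
  induction s using Finset.cons_induction with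
  | empty => simp
  | cons j s hj ih =>
    rw [Finset.forall_mem_cons] at hf
    obtain ⟨hfj, hfs⟩ := hf
    rw [Finset.sum_cons, Finset.prod_cons]
    calc 1 + (f j + ∑ i ∈ s, f i)
        ≤ 1 + (f j + ∑ i ∈ s, f i) + f j * ∑ i ∈ s, f i :=
          le_add_of_nonneg_right (mul_nonneg hfj (Finset.sum_nonneg hfs))
      _ = (1 + f j) * (1 + ∑ i ∈ s, f i) := by ring
      _ ≤ (1 + f j) * ∏ i ∈ s, (1 + f i) :=
          mul_le_mul_of_nonneg_left (ih hfs) (add_nonneg zero_le_one hfj)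

theorem one_sub_sum_mul_prod_one_add_le_one [CommRing R] [PartialOrder R] [IsOrderedRing R]
    (hf : ∀ i ∈ s, 0 ≤ f i) : (1 - ∑ i ∈ s, f i) * ∏ i ∈ s, (1 + f i) ≤ 1 := by
  induction s using Finset.cons_induction with
  | empty => simp
  | cons j s hj ih =>
    rw [Finset.forall_mem_cons] at hf
    obtain ⟨hfj, hfs⟩ := hf
    have hdrop : 0 ≤ f j * (f j + ∑ i ∈ s, f i) :=
      mul_nonneg hfj (add_nonneg hfj (Finset.sum_nonneg hfs))
    have hprod : 0 ≤ ∏ i ∈ s, (1 + f i) :=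
      Finset.prod_nonneg fun i hi => add_nonneg zero_le_one (hfs i hi)
    rw [Finset.sum_cons, Finset.prod_cons]
    calc (1 - (f j + ∑ i ∈ s, f i)) * ((1 + f j) * ∏ i ∈ s, (1 + f i))
        = (1 - ∑ i ∈ s, f i - f j * (f j + ∑ i ∈ s, f i)) * ∏ i ∈ s, (1 + f i) := by ring
      _ ≤ (1 - ∑ i ∈ s, f i) * ∏ i ∈ s, (1 + f i) :=
          mul_le_mul_of_nonneg_right (sub_le_self _ hdrop) hprod
      _ ≤ 1 := ih hfs

variable [Field R] [LinearOrder R] [IsStrictOrderedRing R]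

theorem one_sub_sum_le_prod_inv_one_add (hf : ∀ i ∈ s, 0 ≤ f i) :
    1 - ∑ i ∈ s, f i ≤ ∏ i ∈ s, (1 + f i)⁻¹ := by
  have hprod : 0 < ∏ i ∈ s, (1 + f i) :=
    Finset.prod_pos fun i hi => add_pos_of_pos_of_nonneg one_pos (hf i hi)
  rw [Finset.prod_inv_distrib, inv_eq_one_div, le_div_iff₀ hprod]
  exact one_sub_sum_mul_prod_one_add_le_one hf

theorem inv_one_add_le_one_sub_add_sq {x : R} (hx : 0 ≤ x) : (1 + x)⁻¹ ≤ 1 - x + x ^ 2 := by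
  rw [inv_le_iff_one_le_mul₀ (add_pos_of_pos_of_nonneg one_pos hx)]
  calc (1 : R) ≤ 1 + x ^ 3 := le_add_of_nonneg_right (pow_nonneg hx 3)
    _ = (1 - x + x ^ 2) * (1 + x) := by ring

theorem prod_inv_one_add_le_one_sub_sum_add_sq (hf : ∀ i ∈ s, 0 ≤ f i) :
    ∏ i ∈ s, (1 + f i)⁻¹ ≤ 1 - ∑ i ∈ s, f i + (∑ i ∈ s, f i) ^ 2 := by
  have hsum : 0 ≤ ∑ i ∈ s, f i := Finset.sum_nonneg hf
  calc ∏ i ∈ s, (1 + f i)⁻¹ = (∏ i ∈ s, (1 + f i))⁻¹ := Finset.prod_inv_distrib _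
    _ ≤ (1 + ∑ i ∈ s, f i)⁻¹ :=
        inv_anti₀ (add_pos_of_pos_of_nonneg one_pos hsum) (one_add_sum_le_prod_one_add hf)
    _ ≤ 1 - ∑ i ∈ s, f i + (∑ i ∈ s, f i) ^ 2 := inv_one_add_le_one_sub_add_sq hsum

end ProductBounds

section Factorial

variable {K : Type*} [Field K] [CharZero K]

theorem sum_range_natCast_div (x : K) (t : ℕ) :
    ∑ i ∈ Finset.range t, (i : K) / x = t * (t - 1) / (2 * x) := by
  rw [← Finset.sum_div, ← Nat.cast_sum, Finset.sum_range_id, ← Nat.choose_two_right,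
    Nat.cast_choose_two, div_div]

theorem pow_mul_prod_one_add_div_eq_ascFactorial {N : ℕ} (hN : 0 < N) (t : ℕ) :
    (N : K) ^ t * ∏ i ∈ Finset.range t, (1 + (i : K) / N) = N.ascFactorial t := by
  have hN' : (N : K) ≠ 0 := Nat.cast_ne_zero.mpr hN.ne'
  rw [Nat.ascFactorial_eq_prod_range, Nat.cast_prod, Finset.pow_eq_prod_const,
    ← Finset.prod_mul_distrib]
  refine Finset.prod_congr rfl fun i _ => ?_
  rw [mul_add, mul_one, mul_div_cancel₀ _ hN', Nat.cast_add]

theorem pow_mul_factorial_div_factorial_eq_prod_inv {N : ℕ} (hN : 0 < N) (t : ℕ) :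
    (N : K) ^ t * ((N - 1).factorial : K) / ((N + t - 1).factorial : K) =
      ∏ i ∈ Finset.range t, (1 + (i : K) / N)⁻¹ := by
  have hpow : (N : K) ^ t ≠ 0 := pow_ne_zero t (Nat.cast_ne_zero.mpr hN.ne')
  have hfact : ((N - 1).factorial : K) ≠ 0 := Nat.cast_ne_zero.mpr (Nat.factorial_ne_zero _)
  rw [← Nat.factorial_mul_ascFactorial' N t hN, Nat.cast_mul,
    ← pow_mul_prod_one_add_div_eq_ascFactorial hN, Finset.prod_inv_distrib, ← mul_assoc,
    mul_comm ((N - 1).factorial : K), div_mul_cancel_left₀ (mul_ne_zero hpow hfact)]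

end Factorial

/-- **Two-sided expansion of the symmetric-subspace normalization constant.**
For positive integers `N, t` and `s = t(t−1)/(2N)`:
`1 − s ≤ N^t·(N−1)!/(N+t−1)! ≤ 1 − s + s²`. -/
theorem normalization_constant_bounds (N t : ℕ) (hN : 0 < N) (ht : 0 < t)
    (s : ℝ) (hs : s = (t : ℝ) * ((t : ℝ) - 1) / (2 * (N : ℝ))) :
    1 - s ≤ (N : ℝ) ^ t * ((N - 1).factorial : ℝ) / ((N + t - 1).factorial : ℝ) ∧
    (N : ℝ) ^ t * ((N - 1).factorial : ℝ) / ((N + t - 1).factorial : ℝ) ≤ 1 - s + s ^ 2 := by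
  have hterm : ∀ i ∈ Finset.range t, 0 ≤ (i : ℝ) / N := fun i _ => by positivity
  rw [pow_mul_factorial_div_factorial_eq_prod_inv hN, hs, ← sum_range_natCast_div]
  exact ⟨one_sub_sum_le_prod_inv_one_add hterm, prod_inv_one_add_le_one_sub_sum_add_sq hterm⟩
end

section
/- Let d ≥ 2 be an integer, let μ be the normalized Haar probability measure on U(d), and let S denote the swap operator on ℂ^d ⊗ ℂ^d (S(u⊗v) = v⊗u). Then for every d²×d² complex matrix M (indexed by Fin d × Fin d), ∫_{U(d)} (U ⊗ U) M (U ⊗ U)ᴴ dμ(U) = α·I + β·S, where α = (d·tr(M) − tr(S·M)) / (d(d²−1)) and β = (d·tr(S·M) − tr(M)) / (d(d²−1)). (Second-moment Haar twirl / two-fold Schur–Weyl projection formula.) -/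
open MeasureTheory Matrix
open scoped Kronecker

attribute [local instance] Matrix.normedAddCommGroup Matrix.normedSpace

/-- The swap operator `S` on `ℂ^d ⊗ ℂ^d`: `S((i,j),(k,l)) = 1` iff `i = l` and `j = k`. -/
noncomputable def swapOp (d : ℕ) : Matrix (Fin d × Fin d) (Fin d × Fin d) ℂ :=
  fun p q => if p.1 = q.2 ∧ p.2 = q.1 then 1 else 0

/-!
By left invariance of `μ` the twirled matrix `T` commutes with every `U ⊗ U`, hence with the
algebra `A` these generate. For an orthogonal projection `P` and a phase `z`, the matrix
`1 + (z - 1) P` is unitary; comparing `z = -1` with `z = i` puts the Leibniz action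
`D P = P ⊗ 1 + 1 ⊗ P` in `A`. By the spectral theorem projections span all matrices, so `D X ∈ A`
for every `X`, and therefore also `X ⊗ Y + Y ⊗ X = D X * D Y - D (X * Y) ∈ A`. Commuting with these
symmetrized tensors of matrix units forces `T = a • 1 + b • S`. Twirling preserves both `tr T` and
`tr (S * T)`, and these two numbers determine `a` and `b`.
-/

section SwapMatrix

variable {n R K : Type*} [DecidableEq n]

variable (n R) in
/-- The swap operator `u ⊗ v ↦ v ⊗ u` on the tensor square of `Rⁿ`, encoded as the permutation
matrix exchanging the two factors of `n × n`. -/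
def swapMatrix [Zero R] [One R] : Matrix (n × n) (n × n) R :=
  Equiv.Perm.permMatrix R (Equiv.prodComm n n)

lemma swapMatrix_apply [Zero R] [One R] (p q : n × n) :
    swapMatrix n R p q = if p.1 = q.2 ∧ p.2 = q.1 then 1 else 0 := by
  simp [swapMatrix, PEquiv.toMatrix_apply, Prod.ext_iff, eq_comm, and_comm]

lemma swapOp_eq_swapMatrix (d : ℕ) : swapOp d = swapMatrix (Fin d) ℂ := by
  ext p q
  rw [swapMatrix_apply, swapOp]

variable [Fintype n]

lemma swapMatrix_mul_self [NonAssocSemiring R] : swapMatrix n R * swapMatrix n R = 1 := by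
  rw [swapMatrix, PEquiv.toMatrix_toPEquiv_mul]
  ext p q
  simp [PEquiv.toMatrix_apply, Matrix.one_apply, Prod.ext_iff]

lemma commute_swapMatrix_kronecker_self [CommSemiring R] (A : Matrix n n R) :
    Commute (swapMatrix n R) (A ⊗ₖ A) := by
  rw [commute_iff_eq, swapMatrix, PEquiv.toMatrix_toPEquiv_mul, PEquiv.mul_toMatrix_toPEquiv]
  ext p q
  simp [mul_comm]

lemma trace_swapMatrix [NonAssocSemiring R] : (swapMatrix n R).trace = Fintype.card n := by
  simp [Matrix.trace, swapMatrix_apply, Fintype.sum_prod_type, ite_and, -Finset.sum_boole]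

lemma trace_smul_one_add_smul_swapMatrix [CommSemiring R] (a b : R) :
    (a • (1 : Matrix (n × n) (n × n) R) + b • swapMatrix n R).trace =
      a * (Fintype.card n : R) ^ 2 + b * Fintype.card n := by
  simp [trace_swapMatrix, sq]

lemma smul_one_add_smul_swapMatrix_eq_trace [Field K]
    (hcard : (Fintype.card n : K) * ((Fintype.card n : K) ^ 2 - 1) ≠ 0)
    {T : Matrix (n × n) (n × n) K} {a b : K} (hT : T = a • 1 + b • swapMatrix n K) :
    T = ((Fintype.card n * T.trace - (swapMatrix n K * T).trace) /
          (Fintype.card n * ((Fintype.card n : K) ^ 2 - 1))) • 1 +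
        ((Fintype.card n * (swapMatrix n K * T).trace - T.trace) /
          (Fintype.card n * ((Fintype.card n : K) ^ 2 - 1))) • swapMatrix n K := by
  have trace_T : T.trace = a * (Fintype.card n : K) ^ 2 + b * Fintype.card n := by
    rw [hT, trace_smul_one_add_smul_swapMatrix]
  have trace_swap_T : (swapMatrix n K * T).trace =
      b * (Fintype.card n : K) ^ 2 + a * Fintype.card n := by
    rw [← trace_smul_one_add_smul_swapMatrix, hT, mul_add, mul_smul_comm, mul_smul_comm, mul_one,
      swapMatrix_mul_self, add_comm]
  rw [trace_T, trace_swap_T]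
  convert hT using 3 <;> rw [div_eq_iff hcard] <;> ring

end SwapMatrix

section LeibnizAction

variable {n R : Type*} [DecidableEq n]

variable (n R) in
/-- The Leibniz action `X ↦ X ⊗ 1 + 1 ⊗ X` of matrices on the tensor square, i.e. the derivative
of `V ↦ V ⊗ V` at the identity. -/
def leibnizKronecker [CommSemiring R] : Matrix n n R →ₗ[R] Matrix (n × n) (n × n) R :=
  (Matrix.kroneckerBilinear (R := R)).flip 1 + Matrix.kroneckerBilinear (R := R) 1

lemma leibnizKronecker_apply [CommSemiring R] (X : Matrix n n R) :
    leibnizKronecker n R X = X ⊗ₖ 1 + 1 ⊗ₖ X := rfl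

lemma one_add_smul_kronecker_self [CommSemiring R] (c : R) (X : Matrix n n R) :
    (1 + c • X) ⊗ₖ (1 + c • X) = 1 + c • leibnizKronecker n R X + c ^ 2 • (X ⊗ₖ X) := by
  simp only [leibnizKronecker_apply, Matrix.add_kronecker, Matrix.kronecker_add,
    Matrix.smul_kronecker, Matrix.kronecker_smul, Matrix.one_kronecker_one]
  module

lemma kronecker_add_kronecker_eq [Fintype n] [CommRing R] (X Y : Matrix n n R) :
    X ⊗ₖ Y + Y ⊗ₖ X =
      leibnizKronecker n R X * leibnizKronecker n R Y - leibnizKronecker n R (X * Y) := by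
  simp only [leibnizKronecker_apply, add_mul, mul_add, ← Matrix.mul_kronecker_mul, mul_one, one_mul]
  abel

end LeibnizAction

section Projections

lemma one_add_sub_one_smul_mem_unitary {R A : Type*} [CommRing R] [StarRing R] [Ring A]
    [StarRing A] [Algebra R A] [StarModule R A] {p : A} (hp : IsStarProjection p) {z : R}
    (hz : z ∈ unitary R) : 1 + (z - 1) • p ∈ unitary A := by
  have hpp : p * p = p := hp.isIdempotentElem
  have hzz : star z * z = 1 := Unitary.star_mul_self_of_mem hz
  have hstar : star (1 + (z - 1) • p) = 1 + (star z - 1) • p := by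
    simp [hp.isSelfAdjoint.star_eq]
  rw [Unitary.mem_iff, hstar]
  simp only [add_mul, mul_add, one_mul, mul_one, smul_mul_smul_comm, hpp]
  constructor <;> linear_combination (norm := module) hzz • p

lemma isStarProjection_single {n R : Type*} [Fintype n] [DecidableEq n] [Semiring R] [StarRing R]
    (i : n) : IsStarProjection (Matrix.single i i (1 : R)) where
  isIdempotentElem := by simp [IsIdempotentElem]
  isSelfAdjoint := by simp [IsSelfAdjoint, Matrix.star_eq_conjTranspose]

lemma mem_span_isStarProjection_of_isHermitian {n 𝕜 : Type*} [Fintype n] [RCLike 𝕜]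
    {H : Matrix n n 𝕜} (hH : H.IsHermitian) :
    H ∈ Submodule.span 𝕜 {P : Matrix n n 𝕜 | IsStarProjection P} := by
  classical
  have hspec := hH.spectral_theorem
  set φ := Unitary.conjStarAlgAut 𝕜 _ hH.eigenvectorUnitary
  have hsum : H = ∑ i, (hH.eigenvalues i : 𝕜) • φ (Matrix.single i i 1) := by
    conv_lhs => rw [hspec, ← Matrix.sum_single_eq_diagonal, map_sum]
    refine Finset.sum_congr rfl fun i _ => ?_
    rw [← map_smul, Matrix.smul_single, smul_eq_mul, mul_one, Function.comp_apply]
  rw [hsum]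
  exact Submodule.sum_mem _ fun i _ => Submodule.smul_mem _ _ <| Submodule.subset_span <|
    (isStarProjection_single i).map φ

lemma span_isStarProjection_eq_top {n : Type*} [Fintype n] :
    Submodule.span ℂ {P : Matrix n n ℂ | IsStarProjection P} = ⊤ := by
  rw [eq_top_iff, ← span_selfAdjoint, Submodule.span_le]
  exact fun _ hH => mem_span_isStarProjection_of_isHermitian hH

end Projections

section Commutant

variable {n : Type*} [Fintype n] [DecidableEq n]
  {A : Subalgebra ℂ (Matrix (n × n) (n × n) ℂ)}

lemma leibnizKronecker_mem_of_isStarProjection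
    (hA : ∀ V ∈ Matrix.unitaryGroup n ℂ, V ⊗ₖ V ∈ A) {P : Matrix n n ℂ}
    (hP : IsStarProjection P) : leibnizKronecker n ℂ P ∈ A := by
  have hmem (z : ℂ) (hz : z ∈ unitary ℂ) :
      1 + (z - 1) • leibnizKronecker n ℂ P + (z - 1) ^ 2 • (P ⊗ₖ P) ∈ A :=
    one_add_smul_kronecker_self (z - 1) P ▸ hA _ (one_add_sub_one_smul_mem_unitary hP hz)
  have hneg := hmem (-1) (by simp [Unitary.mem_iff])
  have hI := hmem Complex.I (by simp [Unitary.mem_iff])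
  have hI_sq : (Complex.I - 1) ^ 2 = -2 * Complex.I := by linear_combination Complex.I_sq
  rw [hI_sq] at hI
  -- The phases `-1` and `I` suffice to eliminate the quadratic term `P ⊗ P`.
  have hcomb : leibnizKronecker n ℂ P = (1 + Complex.I / 2) • 1
      - (Complex.I / 2) •
        (1 + (-1 - 1 : ℂ) • leibnizKronecker n ℂ P + (-1 - 1 : ℂ) ^ 2 • (P ⊗ₖ P))
      - (1 + (Complex.I - 1) • leibnizKronecker n ℂ P + (-2 * Complex.I) • (P ⊗ₖ P)) := by
    module
  rw [hcomb]
  exact sub_mem (sub_mem (A.smul_mem A.one_mem _) (A.smul_mem hneg _)) hI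

lemma leibnizKronecker_mem (hA : ∀ V ∈ Matrix.unitaryGroup n ℂ, V ⊗ₖ V ∈ A)
    (X : Matrix n n ℂ) : leibnizKronecker n ℂ X ∈ A := by
  have hspan : Submodule.span ℂ {P : Matrix n n ℂ | IsStarProjection P} ≤
      A.toSubmodule.comap (leibnizKronecker n ℂ) :=
    Submodule.span_le.mpr fun _ hP => leibnizKronecker_mem_of_isStarProjection hA hP
  rw [span_isStarProjection_eq_top] at hspan
  exact hspan Submodule.mem_top

lemma kronecker_add_kronecker_mem (hA : ∀ V ∈ Matrix.unitaryGroup n ℂ, V ⊗ₖ V ∈ A)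
    (X Y : Matrix n n ℂ) : X ⊗ₖ Y + Y ⊗ₖ X ∈ A := by
  rw [kronecker_add_kronecker_eq]
  exact sub_mem (A.mul_mem (leibnizKronecker_mem hA X) (leibnizKronecker_mem hA Y))
    (leibnizKronecker_mem hA (X * Y))

lemma eq_smul_one_add_smul_swapMatrix_of_commute {R : Type*} [CommSemiring R]
    {T : Matrix (n × n) (n × n) R}
    (hT : ∀ X Y : Matrix n n R, Commute (X ⊗ₖ Y + Y ⊗ₖ X) T) {p q : n} (hpq : p ≠ q) :
    T = T (p, q) (p, q) • 1 + T (q, p) (p, q) • swapMatrix n R := by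
  ext ⟨r, s⟩ ⟨i, j⟩
  -- Column `(p, q)` of `(E ⊗ F + F ⊗ E) T` sees only the rows `(p, q)` and `(q, p)` of `T`.
  have h := congrFun₂ (hT (Matrix.single i p 1) (Matrix.single j q 1)).eq (r, s) (p, q)
  simp only [Matrix.single_kronecker_single, mul_one, add_mul, mul_add, Matrix.add_apply] at h
  simpa [Matrix.mul_apply, Matrix.single_apply, Matrix.one_apply, swapMatrix_apply, ite_and, hpq,
    @eq_comm n r, @eq_comm n s] using h.symm

theorem exists_eq_smul_one_add_smul_swapMatrix [Nontrivial n] {T : Matrix (n × n) (n × n) ℂ}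
    (hT : ∀ V ∈ Matrix.unitaryGroup n ℂ, Commute (V ⊗ₖ V) T) :
    ∃ a b : ℂ, T = a • 1 + b • swapMatrix n ℂ := by
  obtain ⟨p, q, hpq⟩ := exists_pair_ne n
  have hA (V : Matrix n n ℂ) (hV : V ∈ Matrix.unitaryGroup n ℂ) :
      V ⊗ₖ V ∈ Subalgebra.centralizer ℂ {T} :=
    (Subalgebra.mem_centralizer_iff ℂ).mpr (by simpa using (hT V hV).symm.eq)
  exact ⟨_, _, eq_smul_one_add_smul_swapMatrix_of_commute
    (fun X Y => ((Subalgebra.mem_centralizer_iff ℂ).mp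
      (kronecker_add_kronecker_mem hA X Y) T rfl).symm) hpq⟩

end Commutant

section Twirl

variable {G m 𝕜 : Type*} [Fintype m] [DecidableEq m] [RCLike 𝕜] [Group G] [MeasurableSpace G]

/-- The twirl `∫ ρ(g) M ρ(g)ᴴ dμ(g)` of a matrix `M` by a unitary representation `ρ`. -/
noncomputable def twirl (μ : Measure G) (ρ : G →* Matrix.unitaryGroup m 𝕜) (M : Matrix m m 𝕜) :
    Matrix m m 𝕜 :=
  ∫ g, (ρ g : Matrix m m 𝕜) * M * (ρ g : Matrix m m 𝕜)ᴴ ∂μ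

variable [TopologicalSpace G] [CompactSpace G] [BorelSpace G] {μ : Measure G}
  {ρ : G →* Matrix.unitaryGroup m 𝕜}

lemma map_twirl [IsFiniteMeasure μ] (hρ : Continuous ρ) {E : Type*}
    [NormedAddCommGroup E] [NormedSpace ℝ E] [NormedSpace 𝕜 E] [CompleteSpace E]
    (L : Matrix m m 𝕜 →ₗ[𝕜] E) (M : Matrix m m 𝕜) :
    L (twirl μ ρ M) = ∫ g, L ((ρ g : Matrix m m 𝕜) * M * (ρ g : Matrix m m 𝕜)ᴴ) ∂μ := by
  have hρ' : Continuous fun g => (ρ g : Matrix m m 𝕜) := continuous_subtype_val.comp hρ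
  have hconj : Continuous fun g => (ρ g : Matrix m m 𝕜) * M * (ρ g : Matrix m m 𝕜)ᴴ :=
    (hρ'.matrix_mul continuous_const).matrix_mul hρ'.matrix_conjTranspose
  exact (L.toContinuousLinearMap.integral_comp_comm
    (hconj.integrable_of_hasCompactSupport (.of_compactSpace _))).symm

lemma commute_twirl [ContinuousMul G] [IsFiniteMeasure μ] [μ.IsMulLeftInvariant] (hρ : Continuous ρ)
    (M : Matrix m m 𝕜) (h : G) : Commute (ρ h : Matrix m m 𝕜) (twirl μ ρ M) := by
  have hconj : (ρ h : Matrix m m 𝕜) * twirl μ ρ M * (ρ h : Matrix m m 𝕜)ᴴ = twirl μ ρ M :=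
    calc (ρ h : Matrix m m 𝕜) * twirl μ ρ M * (ρ h : Matrix m m 𝕜)ᴴ
      _ = ∫ g, (ρ h : Matrix m m 𝕜) * ((ρ g : Matrix m m 𝕜) * M * (ρ g : Matrix m m 𝕜)ᴴ) *
            (ρ h : Matrix m m 𝕜)ᴴ ∂μ :=
        map_twirl hρ (LinearMap.mulRight 𝕜 (ρ h : Matrix m m 𝕜)ᴴ ∘ₗ
          LinearMap.mulLeft 𝕜 (ρ h : Matrix m m 𝕜)) M
      _ = ∫ g, (ρ (h * g) : Matrix m m 𝕜) * M * (ρ (h * g) : Matrix m m 𝕜)ᴴ ∂μ := by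
        simp only [map_mul, Submonoid.coe_mul, Matrix.conjTranspose_mul, mul_assoc]
      _ = twirl μ ρ M :=
        integral_mul_left_eq_self (fun g => (ρ g : Matrix m m 𝕜) * M * (ρ g : Matrix m m 𝕜)ᴴ) h
  rw [commute_iff_eq]
  conv_rhs => rw [← hconj, mul_assoc, ← Matrix.star_eq_conjTranspose,
    Unitary.star_mul_self_of_mem (ρ h).2, mul_one]

lemma trace_mul_twirl [IsProbabilityMeasure μ] (hρ : Continuous ρ) {A : Matrix m m 𝕜}
    (hA : ∀ g, Commute A (ρ g)) (M : Matrix m m 𝕜) :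
    (A * twirl μ ρ M).trace = (A * M).trace := by
  have hconst (g : G) :
      (A * ((ρ g : Matrix m m 𝕜) * M * (ρ g : Matrix m m 𝕜)ᴴ)).trace = (A * M).trace :=
    calc (A * ((ρ g : Matrix m m 𝕜) * M * (ρ g : Matrix m m 𝕜)ᴴ)).trace
      _ = ((ρ g : Matrix m m 𝕜) * (A * M) * (ρ g : Matrix m m 𝕜)ᴴ).trace := by
        rw [← mul_assoc, ← mul_assoc, (hA g).eq, mul_assoc (ρ g : Matrix m m 𝕜)]
      _ = (A * M).trace := by
        rw [Matrix.trace_mul_comm, ← mul_assoc, ← Matrix.star_eq_conjTranspose,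
          Unitary.star_mul_self_of_mem (ρ g).2, one_mul]
  have htrace := map_twirl (μ := μ) hρ
    (Matrix.traceLinearMap m 𝕜 𝕜 ∘ₗ LinearMap.mulLeft 𝕜 A) M
  simpa [hconst] using htrace

lemma trace_twirl [IsProbabilityMeasure μ] (hρ : Continuous ρ) (M : Matrix m m 𝕜) :
    (twirl μ ρ M).trace = M.trace := by
  simpa only [one_mul] using trace_mul_twirl (μ := μ) hρ (fun _ => Commute.one_left _) M

end Twirl

section UnitaryGroup

variable {n 𝕜 : Type*} [Fintype n] [DecidableEq n] [RCLike 𝕜]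

instance compactSpace_unitaryGroup : CompactSpace (Matrix.unitaryGroup n 𝕜) := by
  have hclosed : IsClosed (Matrix.unitaryGroup n 𝕜 : Set (Matrix n n 𝕜)) := isClosed_unitary
  have hbounded : Bornology.IsBounded (Matrix.unitaryGroup n 𝕜 : Set (Matrix n n 𝕜)) :=
    (Metric.isBounded_closedBall (x := 0) (r := 1)).subset fun _ hU =>
      mem_closedBall_zero_iff.mpr (entrywise_sup_norm_bound_of_unitary hU)
  exact isCompact_iff_compactSpace.mp (Metric.isCompact_of_isClosed_isBounded hclosed hbounded)

variable (n 𝕜) in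
/-- The representation `U ↦ U ⊗ U` of the unitary group on the tensor square of `𝕜ⁿ`. -/
def kroneckerSquare : Matrix.unitaryGroup n 𝕜 →* Matrix.unitaryGroup (n × n) 𝕜 where
  toFun U := ⟨U.1 ⊗ₖ U.1, Matrix.kronecker_mem_unitary U.2 U.2⟩
  map_one' := Subtype.ext Matrix.one_kronecker_one
  map_mul' U V := Subtype.ext (Matrix.mul_kronecker_mul U.1 V.1 U.1 V.1)

lemma coe_kroneckerSquare (U : Matrix.unitaryGroup n 𝕜) :
    (kroneckerSquare n 𝕜 U : Matrix (n × n) (n × n) 𝕜) = U.1 ⊗ₖ U.1 := rfl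

lemma continuous_kroneckerSquare : Continuous (kroneckerSquare n 𝕜) := by
  refine Continuous.subtype_mk (continuous_matrix fun p q => ?_) _
  exact (continuous_subtype_val.matrix_elem p.1 q.1).mul
    (continuous_subtype_val.matrix_elem p.2 q.2)

end UnitaryGroup

theorem haar_twirl_two_general {n : Type*} [Fintype n] [DecidableEq n] [Nontrivial n]
    (μ : Measure (Matrix.unitaryGroup n ℂ)) [μ.IsMulLeftInvariant] [IsProbabilityMeasure μ]
    (M : Matrix (n × n) (n × n) ℂ) :
    ∫ U, ((U : Matrix n n ℂ) ⊗ₖ (U : Matrix n n ℂ)) * M *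
        ((U : Matrix n n ℂ) ⊗ₖ (U : Matrix n n ℂ))ᴴ ∂μ =
      ((Fintype.card n * M.trace - (swapMatrix n ℂ * M).trace) /
          (Fintype.card n * ((Fintype.card n : ℂ) ^ 2 - 1))) • 1 +
        ((Fintype.card n * (swapMatrix n ℂ * M).trace - M.trace) /
          (Fintype.card n * ((Fintype.card n : ℂ) ^ 2 - 1))) • swapMatrix n ℂ := by
  change twirl μ (kroneckerSquare n ℂ) M = _
  have hcommute (V : Matrix n n ℂ) (hV : V ∈ Matrix.unitaryGroup n ℂ) :
      Commute (V ⊗ₖ V) (twirl μ (kroneckerSquare n ℂ) M) :=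
    commute_twirl continuous_kroneckerSquare M ⟨V, hV⟩
  obtain ⟨a, b, hab⟩ := exists_eq_smul_one_add_smul_swapMatrix hcommute
  have hcard : (Fintype.card n : ℂ) * ((Fintype.card n : ℂ) ^ 2 - 1) ≠ 0 := by
    have hlt : 1 < Fintype.card n := Fintype.one_lt_card
    refine mul_ne_zero (by exact_mod_cast (by omega : Fintype.card n ≠ 0)) (sub_ne_zero.mpr ?_)
    exact_mod_cast (Nat.one_lt_pow two_ne_zero hlt).ne'
  have htrace : (twirl μ (kroneckerSquare n ℂ) M).trace = M.trace :=
    trace_twirl continuous_kroneckerSquare M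
  have hswap (U : Matrix.unitaryGroup n ℂ) :
      Commute (swapMatrix n ℂ) (kroneckerSquare n ℂ U : Matrix (n × n) (n × n) ℂ) := by
    rw [coe_kroneckerSquare]
    exact commute_swapMatrix_kronecker_self _
  have htrace_swap :
      (swapMatrix n ℂ * twirl μ (kroneckerSquare n ℂ) M).trace = (swapMatrix n ℂ * M).trace :=
    trace_mul_twirl continuous_kroneckerSquare hswap M
  rw [← htrace, ← htrace_swap]
  exact smul_one_add_smul_swapMatrix_eq_trace hcard hab

/-- **Second-moment Haar twirl (two-fold Schur–Weyl projection formula).**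
`∫ (U⊗U) M (U⊗U)ᴴ dμ(U) = α·I + β·S` with
`α = (d·tr M − tr(SM))/(d(d²−1))` and `β = (d·tr(SM) − tr M)/(d(d²−1))`. -/
theorem haar_twirl_two (d : ℕ) (hd : 2 ≤ d)
    (μ : Measure (Matrix.unitaryGroup (Fin d) ℂ))
    [μ.IsHaarMeasure] [IsProbabilityMeasure μ]
    (M : Matrix (Fin d × Fin d) (Fin d × Fin d) ℂ) :
    (∫ U, ((U : Matrix (Fin d) (Fin d) ℂ) ⊗ₖ (U : Matrix (Fin d) (Fin d) ℂ)) * M *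
        ((U : Matrix (Fin d) (Fin d) ℂ) ⊗ₖ (U : Matrix (Fin d) (Fin d) ℂ))ᴴ ∂μ)
      = ((((d : ℂ) * M.trace - (swapOp d * M).trace) / ((d : ℂ) * ((d : ℂ) ^ 2 - 1))) •
          (1 : Matrix (Fin d × Fin d) (Fin d × Fin d) ℂ)) +
        ((((d : ℂ) * (swapOp d * M).trace - M.trace) / ((d : ℂ) * ((d : ℂ) ^ 2 - 1))) •
          swapOp d) := by
  have : Nontrivial (Fin d) := Fin.nontrivial_iff_two_le.mpr hd
  simpa only [swapOp_eq_swapMatrix, Fintype.card_fin] using haar_twirl_two_general μ M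
end

section
/- Let d ≥ 1 be an integer, let μ be the normalized Haar probability measure on U(d), let Γ(X) = Σ_{i=1}^r K_i X K_iᴴ be a Kraus channel on d×d matrices (so Σ_i K_iᴴ K_i = I), and let ψ ∈ ℂ^d be any unit vector. Then ∫_{U(d)} ⟨Uψ, Γ(Uψ(Uψ)ᴴ) Uψ⟩ dμ(U) = (d^{−1}·Σ_{i=1}^r |tr(K_i)|² + 1) / (d + 1). (The average channel fidelity over Haar random pure states is determined by Σ_i |tr K_i|²; equation relating channel fidelity and entanglement fidelity.) -/
open MeasureTheory Matrix

attribute [local instance] Matrix.normedAddCommGroup Matrix.normedSpace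

/-!
The law of `v = Uψ` is invariant under the unitary group. Since every vector `w` is a multiple of a
row of a unitary matrix, invariance alone gives `E |w · v|⁴ = α |w|⁴` with `α` independent of `w`.
Both sides are restrictions to the diagonal of forms of bidegree `(2, 2)`, so polarization recovers
`E v_i v_j conj (v_k v_l) = (δ_ik δ_jl + δ_il δ_jk) α / 2`, that is,
`E ⟨v, A v⟩ ⟨v, B v⟩ = (tr A tr B + tr (A B)) α / 2`. Taking `A = B = 1` gives
`α / 2 = 1 / (d (d + 1))`, and the fidelity is the sum of these moments over `A = Kᵢ`, `B = Kᵢᴴ`.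
-/

variable {n : Type*} [Fintype n]

theorem star_dotProduct_mulVec_self {R : Type*} [CommSemiring R] [Star R] (A : Matrix n n R)
    (v : n → R) : star v ⬝ᵥ A *ᵥ v = ∑ p : n × n, A p.1 p.2 * (v p.2 * star (v p.1)) := by
  simp only [dotProduct, mulVec, Fintype.sum_prod_type, Finset.mul_sum, Pi.star_apply]
  exact Finset.sum_congr rfl fun i _ ↦ Finset.sum_congr rfl fun j _ ↦ by ring

theorem star_dotProduct_mul_vecMulVec_mul_mulVec {R : Type*} [CommSemiring R] [Star R]
    (A B : Matrix n n R) (v : n → R) :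
    star v ⬝ᵥ ((A * vecMulVec v (star v) * B) *ᵥ v) = (star v ⬝ᵥ A *ᵥ v) * (star v ⬝ᵥ B *ᵥ v) := by
  rw [← mulVec_mulVec, ← mulVec_mulVec, vecMulVec_mulVec, mulVec_smul, dotProduct_smul]
  simp

theorem star_mulVec_dotProduct_mulVec_of_mem_unitaryGroup [DecidableEq n] {R : Type*} [CommRing R]
    [StarRing R] {V : Matrix n n R} (hV : V ∈ unitaryGroup n R) (v : n → R) :
    star (V *ᵥ v) ⬝ᵥ (V *ᵥ v) = star v ⬝ᵥ v := by
  rw [star_mulVec, ← dotProduct_mulVec, mulVec_mulVec, ← star_eq_conjTranspose,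
    mem_unitaryGroup_iff'.1 hV, one_mulVec]

theorem norm_le_one_of_star_dotProduct_self {𝕜 : Type*} [RCLike 𝕜] {v : n → 𝕜}
    (hv : star v ⬝ᵥ v = 1) : ‖v‖ ≤ 1 := by
  refine (pi_norm_le_iff_of_nonneg zero_le_one).2 fun a ↦ ?_
  have hsum : ∑ b, ‖v b‖ ^ 2 = 1 := by
    have h := hv
    simp only [dotProduct, Pi.star_apply, RCLike.star_def, RCLike.conj_mul] at h
    exact_mod_cast h
  have : ‖v a‖ ^ 2 ≤ 1 := hsum ▸
    Finset.single_le_sum (fun b _ ↦ sq_nonneg ‖v b‖) (Finset.mem_univ a)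
  exact (sq_le_one_iff₀ (norm_nonneg _)).1 this

theorem exists_mem_unitaryGroup_smul_row_eq [DecidableEq n] {𝕜 : Type*} [RCLike 𝕜]
    (w : n → 𝕜) (a : n) : ∃ c : 𝕜, ∃ V ∈ unitaryGroup n 𝕜, c • V a = w := by
  obtain rfl | hw := eq_or_ne w 0
  · exact ⟨0, 1, one_mem _, zero_smul ..⟩
  let e : EuclideanSpace 𝕜 n := WithLp.toLp 2 w
  have he : ‖e‖ ≠ 0 := by simpa [e] using hw
  have hunit : Orthonormal 𝕜 (({a} : Set n).domRestrict fun _ ↦ (‖e‖⁻¹ : 𝕜) • e) := by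
    simp [orthonormal_subsingleton_iff, norm_smul, he]
  obtain ⟨b, hb⟩ := hunit.exists_orthonormalBasis_extension_of_card_eq (by simp)
  refine ⟨‖e‖, of fun i j ↦ b i j, ?_, ?_⟩
  · rw [mem_unitaryGroup_iff]
    ext i j
    simpa [EuclideanSpace.inner_eq_star_dotProduct, mul_apply, dotProduct, one_apply, eq_comm]
      using orthonormal_iff_ite.1 b.orthonormal j i
  · ext j
    simp [hb, e, he]

-- The sum projects onto the `ζ⁻²` Fourier component of the square; five is the least order for
-- which the exponents `-2, …, 2` occurring in it are distinct.
theorem sum_sq_mul_sq_of_isPrimitiveRoot_five {K : Type*} [Field K] {ζ : K}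
    (hζ : IsPrimitiveRoot ζ 5) (S P Q : K) :
    ∑ k ∈ Finset.range 5, (ζ ^ k) ^ 2 * (S + (ζ ^ k)⁻¹ * P + ζ ^ k * Q) ^ 2 = 5 * P ^ 2 := by
  have hgeom (j : ℕ) (hj : j.Coprime 5) : ∑ k ∈ Finset.range 5, (ζ ^ j) ^ k = 0 :=
    (hζ.pow_of_coprime j hj).geom_sum_eq_zero (by norm_num)
  have hexpand (k : ℕ) : (ζ ^ k) ^ 2 * (S + (ζ ^ k)⁻¹ * P + ζ ^ k * Q) ^ 2 =
      P ^ 2 + 2 * S * P * (ζ ^ 1) ^ k + (S ^ 2 + 2 * P * Q) * (ζ ^ 2) ^ k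
        + 2 * S * Q * (ζ ^ 3) ^ k + Q ^ 2 * (ζ ^ 4) ^ k := by
    have hζ0 : ζ ≠ 0 := hζ.ne_zero (by norm_num)
    field_simp
    ring
  simp only [hexpand, Finset.sum_add_distrib, ← Finset.mul_sum]
  rw [hgeom 1 (by norm_num), hgeom 2 (by norm_num), hgeom 3 (by norm_num), hgeom 4 (by norm_num)]
  simp

theorem sum_sq_mul_dotProduct_star_sq {ζ : ℂ} (hζ : IsPrimitiveRoot ζ 5) (w u : n → ℂ) :
    ∑ k ∈ Finset.range 5, (ζ ^ k) ^ 2 * ((w + ζ ^ k • u) ⬝ᵥ star (w + ζ ^ k • u)) ^ 2 =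
      5 * (w ⬝ᵥ star u) ^ 2 := by
  have hexpand (k : ℕ) : (w + ζ ^ k • u) ⬝ᵥ star (w + ζ ^ k • u) =
      (w ⬝ᵥ star w + u ⬝ᵥ star u) + (ζ ^ k)⁻¹ * (w ⬝ᵥ star u) + ζ ^ k * (u ⬝ᵥ star w) := by
    have hstar : star (ζ ^ k) = (ζ ^ k)⁻¹ := by
      refine (Complex.inv_eq_conj ?_).symm
      rw [norm_pow, hζ.norm'_eq_one (by norm_num), one_pow]
    have hζk : (ζ ^ k) * (ζ ^ k)⁻¹ = 1 :=
      mul_inv_cancel₀ (pow_ne_zero k (hζ.ne_zero (by norm_num)))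
    simp only [add_dotProduct, smul_dotProduct, dotProduct_add, dotProduct_smul, smul_eq_mul,
      star_add, star_smul, hstar]
    linear_combination (u ⬝ᵥ star u) * hζk
  simp only [hexpand, sum_sq_mul_sq_of_isPrimitiveRoot_five hζ]

/-- The law `ν` of a Haar random pure state: a distribution of unit vectors of `ℂⁿ` invariant under
the unitary group. Normalization of `ν` is left to `IsProbabilityMeasure ν`; unit length is stated
with the dot product because the norm of `n → ℂ` is the supremum norm. -/
structure IsHaarState [DecidableEq n] (ν : Measure (n → ℂ)) : Prop where
  ae_star_dotProduct_self : ∀ᵐ v ∂ν, star v ⬝ᵥ v = 1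
  map_mulVec : ∀ V ∈ unitaryGroup n ℂ, ν.map (V *ᵥ ·) = ν

theorem continuous_unitaryGroup_mulVec [DecidableEq n] {R : Type*} [CommRing R] [StarRing R]
    [TopologicalSpace R] [IsTopologicalSemiring R] (ψ : n → R) :
    Continuous fun U : unitaryGroup n R ↦ (U : Matrix n n R) *ᵥ ψ := by
  fun_prop

theorem isHaarState_map_mulVec [DecidableEq n] (μ : Measure (unitaryGroup n ℂ))
    [μ.IsMulLeftInvariant] {ψ : n → ℂ} (hψ : star ψ ⬝ᵥ ψ = 1) :
    IsHaarState (μ.map fun U : unitaryGroup n ℂ ↦ (U : Matrix n n ℂ) *ᵥ ψ) where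
  ae_star_dotProduct_self := by
    refine (ae_map_iff (continuous_unitaryGroup_mulVec ψ).aemeasurable
      (isClosed_eq ?_ continuous_const).measurableSet).2 (.of_forall fun U ↦ ?_)
    · fun_prop
    · rw [star_mulVec_dotProduct_mulVec_of_mem_unitaryGroup U.2, hψ]
  map_mulVec V hV := by
    let V' : unitaryGroup n ℂ := ⟨V, hV⟩
    have hcomm : (V *ᵥ ·) ∘ (fun U : unitaryGroup n ℂ ↦ (U : Matrix n n ℂ) *ᵥ ψ) =
        (fun U : unitaryGroup n ℂ ↦ (U : Matrix n n ℂ) *ᵥ ψ) ∘ (V' * ·) := by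
      ext1 U
      exact mulVec_mulVec ..
    rw [Measure.map_map (by fun_prop) (continuous_unitaryGroup_mulVec ψ).measurable, hcomm,
      ← Measure.map_map (continuous_unitaryGroup_mulVec ψ).measurable (by fun_prop),
      map_mul_left_eq_self]

/-- The fourth absolute moment `E |v a|⁴` of a coordinate of a random vector, kept complex-valued so
that it can be polarized. -/
noncomputable def fourthMoment (ν : Measure (n → ℂ)) (a : n) : ℂ :=
  ∫ v, v a ^ 2 * star (v a) ^ 2 ∂ν

namespace IsHaarState

variable [DecidableEq n] {ν : Measure (n → ℂ)}

theorem integrable {E : Type*} [NormedAddCommGroup E] [IsFiniteMeasure ν] (hν : IsHaarState ν)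
    {f : (n → ℂ) → E} (hf : Continuous f) : Integrable f ν := by
  have hball : ∀ᵐ v ∂ν, v ∈ Metric.closedBall (0 : n → ℂ) 1 :=
    hν.ae_star_dotProduct_self.mono fun v hv ↦ by
      simpa using norm_le_one_of_star_dotProduct_self hv
  rw [← Measure.restrict_eq_self_of_ae_mem hball]
  exact hf.continuousOn.integrableOn_compact (isCompact_closedBall 0 1)

theorem integral_sq_mul_star_sq_self (hν : IsHaarState ν) (w : n → ℂ) (a : n) :
    ∫ v, (w ⬝ᵥ v) ^ 2 * star (w ⬝ᵥ v) ^ 2 ∂ν = (w ⬝ᵥ star w) ^ 2 * fourthMoment ν a := by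
  obtain ⟨c, V, hV, rfl⟩ := exists_mem_unitaryGroup_smul_row_eq w a
  have hrow : V a ⬝ᵥ star (V a) = 1 := by
    simpa [mul_apply, dotProduct] using congr_fun₂ (mem_unitaryGroup_iff.1 hV) a a
  have hinv : ∫ v, (V a ⬝ᵥ v) ^ 2 * star (V a ⬝ᵥ v) ^ 2 ∂ν = fourthMoment ν a := by
    rw [fourthMoment]
    conv_rhs => rw [← hν.map_mulVec V hV]
    rw [integral_map (by fun_prop) (Continuous.aestronglyMeasurable (by fun_prop))]
    rfl
  rw [← hinv, ← integral_const_mul]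
  simp only [smul_dotProduct, star_smul, dotProduct_smul, hrow, smul_eq_mul, star_mul']
  congr with v
  ring

theorem integral_sq_mul_star_sq [IsFiniteMeasure ν] (hν : IsHaarState ν) (w u : n → ℂ) (a : n) :
    ∫ v, (w ⬝ᵥ v) ^ 2 * star (u ⬝ᵥ v) ^ 2 ∂ν = (w ⬝ᵥ star u) ^ 2 * fourthMoment ν a := by
  obtain ⟨ζ, hζ⟩ : ∃ ζ : ℂ, IsPrimitiveRoot ζ 5 :=
    ⟨_, Complex.isPrimitiveRoot_exp 5 (by norm_num)⟩
  have hpolar (v : n → ℂ) : 5 * ((w ⬝ᵥ v) ^ 2 * star (u ⬝ᵥ v) ^ 2) =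
      ∑ k ∈ Finset.range 5, (ζ ^ k) ^ 2 *
        (((w + ζ ^ k • u) ⬝ᵥ v) ^ 2 * star ((w + ζ ^ k • u) ⬝ᵥ v) ^ 2) := by
    simp only [add_dotProduct, smul_dotProduct]
    simpa only [dotProduct_pUnit, Pi.add_apply, Pi.smul_apply, Pi.star_apply, mul_pow] using
      (sum_sq_mul_dotProduct_star_sq hζ (fun _ : Unit ↦ w ⬝ᵥ v) (fun _ ↦ u ⬝ᵥ v)).symm
  refine mul_left_cancel₀ (by norm_num : (5 : ℂ) ≠ 0) ?_
  calc
    5 * ∫ v, (w ⬝ᵥ v) ^ 2 * star (u ⬝ᵥ v) ^ 2 ∂ν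
      = ∑ k ∈ Finset.range 5, (ζ ^ k) ^ 2 *
          ∫ v, ((w + ζ ^ k • u) ⬝ᵥ v) ^ 2 * star ((w + ζ ^ k • u) ⬝ᵥ v) ^ 2 ∂ν := by
      simp only [← integral_const_mul, hpolar]
      exact integral_finsetSum _ fun k _ ↦ hν.integrable (by fun_prop)
    _ = (∑ k ∈ Finset.range 5, (ζ ^ k) ^ 2 *
          ((w + ζ ^ k • u) ⬝ᵥ star (w + ζ ^ k • u)) ^ 2) * fourthMoment ν a := by
      simp only [hν.integral_sq_mul_star_sq_self _ a, Finset.sum_mul, mul_assoc]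
    _ = 5 * ((w ⬝ᵥ star u) ^ 2 * fourthMoment ν a) := by
      rw [sum_sq_mul_dotProduct_star_sq hζ, mul_assoc]

theorem integral_mul_mul_star_mul [IsFiniteMeasure ν] (hν : IsHaarState ν)
    (w w' u u' : n → ℂ) (a : n) :
    ∫ v, (w ⬝ᵥ v) * (w' ⬝ᵥ v) * star ((u ⬝ᵥ v) * (u' ⬝ᵥ v)) ∂ν =
      ((w ⬝ᵥ star u) * (w' ⬝ᵥ star u') + (w ⬝ᵥ star u') * (w' ⬝ᵥ star u)) *
        (fourthMoment ν a / 2) := by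
  let F (s t : n → ℂ) (v : n → ℂ) : ℂ := (s ⬝ᵥ v) ^ 2 * star (t ⬝ᵥ v) ^ 2
  have hF (s t) : Integrable (F s t) ν := hν.integrable (by fun_prop)
  have hF_integral (s t) : ∫ v, F s t v ∂ν = (s ⬝ᵥ star t) ^ 2 * fourthMoment ν a :=
    hν.integral_sq_mul_star_sq s t a
  have hpolar (v : n → ℂ) : (w ⬝ᵥ v) * (w' ⬝ᵥ v) * star ((u ⬝ᵥ v) * (u' ⬝ᵥ v)) =
      16⁻¹ * ((F (w + w') (u + u') v - F (w + w') (u - u') v) -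
        (F (w - w') (u + u') v - F (w - w') (u - u') v)) := by
    simp only [F, add_dotProduct, sub_dotProduct, star_add, star_sub, star_mul']
    ring
  simp only [hpolar]
  rw [integral_const_mul, integral_sub (by fun_prop) (by fun_prop),
    integral_sub (hF _ _) (hF _ _), integral_sub (hF _ _) (hF _ _)]
  simp only [hF_integral, add_dotProduct, sub_dotProduct, star_add, star_sub, dotProduct_add,
    dotProduct_sub]
  ring

theorem integral_apply_mul_apply_mul_star [IsFiniteMeasure ν] (hν : IsHaarState ν)
    (i j k l a : n) :
    ∫ v, v i * v j * star (v k * v l) ∂ν =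
      ((1 : Matrix n n ℂ) i k * (1 : Matrix n n ℂ) j l +
        (1 : Matrix n n ℂ) i l * (1 : Matrix n n ℂ) j k) * (fourthMoment ν a / 2) := by
  simpa [one_apply, Pi.single_apply, eq_comm] using hν.integral_mul_mul_star_mul
    (Pi.single i 1) (Pi.single j 1) (Pi.single k 1) (Pi.single l 1) a

theorem integral_dotProduct_mulVec_mul_eq_fourthMoment [IsFiniteMeasure ν] (hν : IsHaarState ν)
    (A B : Matrix n n ℂ) (a : n) :
    ∫ v, (star v ⬝ᵥ A *ᵥ v) * (star v ⬝ᵥ B *ᵥ v) ∂ν =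
      (A.trace * B.trace + (A * B).trace) * (fourthMoment ν a / 2) := by
  have hexpand (v : n → ℂ) : (star v ⬝ᵥ A *ᵥ v) * (star v ⬝ᵥ B *ᵥ v) =
      ∑ x : (n × n) × n × n, A x.1.1 x.1.2 * B x.2.1 x.2.2 *
        (v x.1.2 * v x.2.2 * star (v x.1.1 * v x.2.1)) := by
    rw [star_dotProduct_mulVec_self, star_dotProduct_mulVec_self, Fintype.sum_mul_sum,
      ← Fintype.sum_prod_type']
    refine Finset.sum_congr rfl fun x _ ↦ ?_
    rw [star_mul']
    ring
  have hdelta : ∑ x : (n × n) × n × n, A x.1.1 x.1.2 * B x.2.1 x.2.2 *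
      ((1 : Matrix n n ℂ) x.1.2 x.1.1 * (1 : Matrix n n ℂ) x.2.2 x.2.1 +
        (1 : Matrix n n ℂ) x.1.2 x.2.1 * (1 : Matrix n n ℂ) x.2.2 x.1.1) =
      A.trace * B.trace + (A * B).trace := by
    simp [Fintype.sum_prod_type, mul_add, Finset.sum_add_distrib, trace, mul_apply,
      Finset.sum_mul_sum, one_apply]
  simp only [hexpand]
  rw [integral_finsetSum _ fun x _ ↦ hν.integrable (by fun_prop), ← hdelta, Finset.sum_mul]
  refine Finset.sum_congr rfl fun x _ ↦ ?_
  rw [integral_const_mul, hν.integral_apply_mul_apply_mul_star _ _ _ _ a, ← mul_assoc]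

theorem integral_dotProduct_mulVec_mul [IsProbabilityMeasure ν] (hν : IsHaarState ν)
    (A B : Matrix n n ℂ) :
    ∫ v, (star v ⬝ᵥ A *ᵥ v) * (star v ⬝ᵥ B *ᵥ v) ∂ν =
      (A.trace * B.trace + (A * B).trace) / (Fintype.card n * (Fintype.card n + 1)) := by
  obtain ⟨v, hv⟩ := hν.ae_star_dotProduct_self.exists
  obtain ⟨a⟩ : Nonempty n := by
    by_contra! h
    simp at hv
  have hone : ∫ v, (star v ⬝ᵥ (1 : Matrix n n ℂ) *ᵥ v) *
      (star v ⬝ᵥ (1 : Matrix n n ℂ) *ᵥ v) ∂ν = 1 := by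
    have hunit : ∀ᵐ v ∂ν, (star v ⬝ᵥ (1 : Matrix n n ℂ) *ᵥ v) *
        (star v ⬝ᵥ (1 : Matrix n n ℂ) *ᵥ v) = 1 :=
      hν.ae_star_dotProduct_self.mono fun v hv ↦ by simp [hv]
    rw [integral_congr_ae hunit]
    simp
  have hnormalization :
      (Fintype.card n * (Fintype.card n + 1) : ℂ) * (fourthMoment ν a / 2) = 1 := by
    rw [hν.integral_dotProduct_mulVec_mul_eq_fourthMoment 1 1 a, mul_one, trace_one] at hone
    linear_combination hone
  rw [hν.integral_dotProduct_mulVec_mul_eq_fourthMoment A B a,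
    eq_inv_of_mul_eq_one_right hnormalization, div_eq_mul_inv]

end IsHaarState

theorem average_channel_fidelity_general [DecidableEq n] {ι : Type*} [Fintype ι]
    (μ : Measure (unitaryGroup n ℂ)) [μ.IsMulLeftInvariant] [IsProbabilityMeasure μ]
    (K : ι → Matrix n n ℂ) {ψ : n → ℂ} (hψ : star ψ ⬝ᵥ ψ = 1) :
    (∫ U, star ((U : Matrix n n ℂ) *ᵥ ψ) ⬝ᵥ
        ((∑ i, K i * vecMulVec ((U : Matrix n n ℂ) *ᵥ ψ) (star ((U : Matrix n n ℂ) *ᵥ ψ)) *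
            (K i)ᴴ) *ᵥ ((U : Matrix n n ℂ) *ᵥ ψ)) ∂μ) =
      (∑ i, (‖(K i).trace‖ : ℂ) ^ 2 + (∑ i, (K i)ᴴ * K i).trace) /
        (Fintype.card n * (Fintype.card n + 1)) := by
  have hν := isHaarState_map_mulVec μ hψ
  have horbit := (continuous_unitaryGroup_mulVec ψ).aemeasurable (μ := μ)
  have := Measure.isProbabilityMeasure_map horbit
  let fidelity (v : n → ℂ) : ℂ := star v ⬝ᵥ ((∑ i, K i * vecMulVec v (star v) * (K i)ᴴ) *ᵥ v)
  have hfidelity (v : n → ℂ) :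
      fidelity v = ∑ i, (star v ⬝ᵥ K i *ᵥ v) * (star v ⬝ᵥ (K i)ᴴ *ᵥ v) := by
    simp only [fidelity, sum_mulVec, dotProduct_sum, star_dotProduct_mul_vecMulVec_mul_mulVec]
  have hcontinuous : Continuous fidelity := by fun_prop
  rw [← integral_map (f := fidelity) horbit hcontinuous.aestronglyMeasurable]
  simp only [hfidelity]
  rw [integral_finsetSum _ fun i _ ↦ hν.integrable (by fun_prop)]
  simp only [hν.integral_dotProduct_mulVec_mul, trace_conjTranspose, Complex.star_def,
    Complex.mul_conj', trace_mul_comm (K _), ← Finset.sum_div, Finset.sum_add_distrib, trace_sum]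

/-- **Average channel fidelity over Haar random pure states.**
For a Kraus channel `Γ(X) = Σᵢ Kᵢ X Kᵢᴴ` with `Σᵢ Kᵢᴴ Kᵢ = I` and any unit vector `ψ`:
`∫ ⟨Uψ, Γ(Uψ(Uψ)ᴴ) Uψ⟩ dμ(U) = (d⁻¹·Σᵢ |tr Kᵢ|² + 1)/(d + 1)`. -/
theorem average_channel_fidelity (d : ℕ) (hd : 1 ≤ d)
    (μ : Measure (Matrix.unitaryGroup (Fin d) ℂ))
    [μ.IsHaarMeasure] [IsProbabilityMeasure μ]
    (r : ℕ) (K : Fin r → Matrix (Fin d) (Fin d) ℂ)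
    (hK : ∑ i, (K i)ᴴ * K i = 1)
    (ψ : Fin d → ℂ) (hψ : star ψ ⬝ᵥ ψ = 1) :
    (∫ U, star ((U : Matrix (Fin d) (Fin d) ℂ) *ᵥ ψ) ⬝ᵥ
        ((∑ i, K i *
            Matrix.vecMulVec ((U : Matrix (Fin d) (Fin d) ℂ) *ᵥ ψ)
              (star ((U : Matrix (Fin d) (Fin d) ℂ) *ᵥ ψ)) * (K i)ᴴ) *ᵥ
          ((U : Matrix (Fin d) (Fin d) ℂ) *ᵥ ψ)) ∂μ)
      = (((((d : ℝ))⁻¹ * ∑ i, ‖(K i).trace‖ ^ 2 + 1) / ((d : ℝ) + 1) : ℝ) : ℂ) := by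
  have hd0 : (d : ℂ) ≠ 0 := by exact_mod_cast (zero_lt_one.trans_le hd).ne'
  rw [average_channel_fidelity_general μ K hψ, hK, trace_one, Fintype.card_fin]
  push_cast
  field_simp
end

section
/- Let d ≥ 1 be an integer, Γ(X) = Σ_{i=1}^r K_i X K_iᴴ a Kraus channel on d×d matrices (so Σ_i K_iᴴ K_i = I), ρ a density matrix on ℂ^d, and A a d×d complex matrix with operator norm ‖A‖ ≤ 1. Define F′(U) = tr( A · Uᴴ Γ(U ρ Uᴴ) U ). Then for all unitary matrices U, V ∈ U(d): |F′(U) − F′(V)| ≤ 4·‖U − V‖_F, where ‖·‖_F is the Frobenius (Hilbert–Schmidt) norm. (F′ is a Lipschitz function of the scrambling unitary with Lipschitz constant at most 4.) -/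
open Matrix
open scoped ComplexOrder

/-- The Frobenius (Hilbert–Schmidt) norm of a complex matrix: `√(Σᵢⱼ |Mᵢⱼ|²)`. -/
noncomputable def frobNorm {m n : Type*} [Fintype m] [Fintype n] (M : Matrix m n ℂ) : ℝ :=
  Real.sqrt (∑ i, ∑ j, ‖M i j‖ ^ 2)

/-!
In the Heisenberg picture, `F′(U) = tr(Uᴴ Γ†(U A Uᴴ) U ρ)`, where the adjoint `Γ†` of the channel
contracts the operator norm. Conjugation of `a` by a contraction `U` changes by at most
`2 ‖a‖ ‖U - V‖` when `U` is replaced by `V`. It occurs twice, inside and outside `Γ†`, whence the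
constant `4` for the operator norm, which Hölder's inequality `|tr(M ρ)| ≤ ‖M‖ tr ρ` passes on to
`F′`. Finally the Frobenius norm dominates the operator norm.
-/

section KrausMap

variable {ι 𝒜 : Type*} [Fintype ι]

/-- The completely positive map `a ↦ ∑ i, K i * a * star (K i)` with Kraus operators `K`, as an
additive map. In the Heisenberg picture, the same channel acts by the Kraus operators `star K`. -/
def krausMap [NonUnitalNonAssocSemiring 𝒜] [Star 𝒜] (K : ι → 𝒜) : 𝒜 →+ 𝒜 :=
  ∑ i, (AddMonoidHom.mulRight (star (K i))).comp (AddMonoidHom.mulLeft (K i))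

lemma krausMap_apply [NonUnitalNonAssocSemiring 𝒜] [Star 𝒜] (K : ι → 𝒜) (a : 𝒜) :
    krausMap K a = ∑ i, K i * a * star (K i) := by
  simp [krausMap]

open WithCStarModule CStarModule in
lemma norm_krausMap_le [CStarAlgebra 𝒜] (K : ι → 𝒜) (a : 𝒜) :
    ‖krausMap K a‖ ≤ ‖krausMap K 1‖ * ‖a‖ := by
  let _ := CStarAlgebra.spectralOrder 𝒜
  let _ := CStarAlgebra.spectralOrderedRing 𝒜
  -- Cauchy–Schwarz in the Hilbert module `𝒜^ι`, where `krausMap K a` is an inner product.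
  let x : C⋆ᵐᵒᵈ(𝒜, ι → 𝒜) := (equiv 𝒜 (ι → 𝒜)).symm K
  let y : C⋆ᵐᵒᵈ(𝒜, ι → 𝒜) := (equiv 𝒜 (ι → 𝒜)).symm fun i => K i * a
  have inner_eq : inner 𝒜 x y = krausMap K a := (krausMap_apply K a).symm
  have norm_x_sq : ‖x‖ ^ 2 = ‖krausMap K 1‖ := by
    simp [x, pi_norm_sq, inner_def, krausMap_apply]
  have inner_y_le : inner 𝒜 y y ≤ ‖a‖ ^ 2 • krausMap K 1 := by
    simp only [pi_inner, krausMap_apply, Finset.smul_sum, mul_one]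
    refine Finset.sum_le_sum fun i _ => ?_
    simpa [y, inner_def, mul_assoc, CStarRing.norm_self_mul_star, sq] using
      CStarAlgebra.star_right_conjugate_le_norm_smul (a := K i) (b := a * star a)
  have norm_y_sq_le : ‖y‖ ^ 2 ≤ ‖krausMap K 1‖ * ‖a‖ ^ 2 :=
    calc ‖y‖ ^ 2 = ‖inner 𝒜 y y‖ := norm_sq_eq 𝒜
      _ ≤ ‖‖a‖ ^ 2 • krausMap K 1‖ :=
        CStarAlgebra.norm_le_norm_of_nonneg_of_le inner_self_nonneg inner_y_le
      _ = ‖krausMap K 1‖ * ‖a‖ ^ 2 := by simp [norm_smul, mul_comm]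
  refine le_of_sq_le_sq ?_ (by positivity)
  calc ‖krausMap K a‖ ^ 2 ≤ (‖x‖ * ‖y‖) ^ 2 := by
        gcongr
        exact inner_eq ▸ norm_inner_le _
    _ = ‖krausMap K 1‖ * ‖y‖ ^ 2 := by rw [mul_pow, norm_x_sq]
    _ ≤ ‖krausMap K 1‖ * (‖krausMap K 1‖ * ‖a‖ ^ 2) := by gcongr
    _ = (‖krausMap K 1‖ * ‖a‖) ^ 2 := by ring

lemma trace_mul_krausMap {n R : Type*} [Fintype n] [CommSemiring R] [StarRing R]
    (K : ι → Matrix n n R) (M X : Matrix n n R) :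
    (M * krausMap K X).trace = (krausMap (star K) M * X).trace := by
  simp only [krausMap_apply, Finset.mul_sum, Finset.sum_mul, trace_sum, Pi.star_apply, star_star]
  refine Finset.sum_congr rfl fun i _ => ?_
  rw [← mul_assoc, ← mul_assoc, trace_mul_comm]
  simp only [mul_assoc]

end KrausMap

section Contractions

variable {𝒜 : Type*} [NonUnitalSeminormedRing 𝒜] [StarRing 𝒜] [NormedStarGroup 𝒜] {u v : 𝒜}

lemma norm_mul_mul_star_le (hu : ‖u‖ ≤ 1) (a : 𝒜) : ‖u * a * star u‖ ≤ ‖a‖ :=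
  calc ‖u * a * star u‖ ≤ ‖u‖ * ‖a‖ * ‖star u‖ := norm_mul₃_le
    _ ≤ 1 * ‖a‖ * 1 := by rw [norm_star]; gcongr
    _ = ‖a‖ := by ring

lemma norm_mul_mul_star_sub_le (hu : ‖u‖ ≤ 1) (hv : ‖v‖ ≤ 1) (a : 𝒜) :
    ‖u * a * star u - v * a * star v‖ ≤ 2 * ‖a‖ * ‖u - v‖ :=
  calc ‖u * a * star u - v * a * star v‖
      = ‖(u - v) * a * star u + v * a * star (u - v)‖ := by
        rw [star_sub]
        noncomm_ring
    _ ≤ ‖u - v‖ * ‖a‖ * ‖star u‖ + ‖v‖ * ‖a‖ * ‖star (u - v)‖ :=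
        norm_add_le_of_le norm_mul₃_le norm_mul₃_le
    _ ≤ ‖u - v‖ * ‖a‖ * 1 + 1 * ‖a‖ * ‖u - v‖ := by
        rw [norm_star, norm_star]
        gcongr
    _ = 2 * ‖a‖ * ‖u - v‖ := by ring

lemma norm_star_mul_map_mul_sub_le {Φ : 𝒜 →+ 𝒜} (hΦ : ∀ a, ‖Φ a‖ ≤ ‖a‖)
    (hu : ‖u‖ ≤ 1) (hv : ‖v‖ ≤ 1) (a : 𝒜) :
    ‖star u * Φ (u * a * star u) * u - star v * Φ (v * a * star v) * v‖ ≤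
      4 * ‖a‖ * ‖u - v‖ := by
  have hu' : ‖star u‖ ≤ 1 := by rwa [norm_star]
  have hv' : ‖star v‖ ≤ 1 := by rwa [norm_star]
  set b := Φ (u * a * star u)
  set c := Φ (v * a * star v)
  have norm_b_le : ‖b‖ ≤ ‖a‖ := (hΦ _).trans (norm_mul_mul_star_le hu a)
  have norm_b_sub_c_le : ‖b - c‖ ≤ 2 * ‖a‖ * ‖u - v‖ := by
    rw [← map_sub]
    exact (hΦ _).trans (norm_mul_mul_star_sub_le hu hv a)
  have outer_le : ‖star u * b * u - star v * b * v‖ ≤ 2 * ‖b‖ * ‖u - v‖ := by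
    simpa only [star_star, ← star_sub, norm_star] using norm_mul_mul_star_sub_le hu' hv' b
  have inner_le : ‖star v * (b - c) * v‖ ≤ ‖b - c‖ := by
    simpa only [star_star] using norm_mul_mul_star_le hv' (b - c)
  calc ‖star u * b * u - star v * c * v‖
      = ‖(star u * b * u - star v * b * v) + star v * (b - c) * v‖ := by noncomm_ring
    _ ≤ 2 * ‖b‖ * ‖u - v‖ + ‖b - c‖ := norm_add_le_of_le outer_le inner_le
    _ ≤ 2 * ‖a‖ * ‖u - v‖ + 2 * ‖a‖ * ‖u - v‖ := by gcongr
    _ = 4 * ‖a‖ * ‖u - v‖ := by ring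

end Contractions

section MatrixNorms

variable {m n : Type*} [Fintype m] [Fintype n]

open scoped Matrix.Norms.Frobenius in
lemma norm_mulVec_le_frobNorm_mul (M : Matrix m n ℂ) (v : n → ℂ) :
    ‖WithLp.toLp 2 (M *ᵥ v)‖ ≤ frobNorm M * ‖WithLp.toLp 2 v‖ := by
  have frobNorm_eq : frobNorm M = ‖M‖ := by
    simp [frobNorm, frobenius_norm_def, Real.sqrt_eq_rpow]
  rw [frobNorm_eq, ← frobenius_norm_replicateCol (ι := Unit), replicateCol_mulVec,
    ← frobenius_norm_replicateCol (ι := Unit)]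
  exact frobenius_norm_mul _ _

open scoped Matrix.Norms.L2Operator

variable [DecidableEq n]

lemma l2_opNorm_le_frobNorm (M : Matrix m n ℂ) : ‖M‖ ≤ frobNorm M :=
  ContinuousLinearMap.opNorm_le_bound _ (Real.sqrt_nonneg _) fun v =>
    norm_mulVec_le_frobNorm_mul M v.ofLp

lemma l2_opNorm_le_one_iff {𝕜 : Type*} [RCLike 𝕜] {M : Matrix m n 𝕜} :
    ‖M‖ ≤ 1 ↔ ∀ v : EuclideanSpace 𝕜 n, ‖toEuclideanLin M v‖ ≤ ‖v‖ := by
  rw [l2_opNorm_def, ContinuousLinearMap.opNorm_le_iff zero_le_one]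
  simp only [one_mul]
  rfl

lemma norm_star_dotProduct_mulVec_le (M : Matrix n n ℂ) (v : n → ℂ) :
    ‖star v ⬝ᵥ M *ᵥ v‖ ≤ ‖M‖ * ‖WithLp.toLp 2 v‖ ^ 2 := by
  rw [dotProduct_comm, ← EuclideanSpace.inner_toLp_toLp]
  calc ‖inner ℂ (WithLp.toLp 2 v) (WithLp.toLp 2 (M *ᵥ v))‖
      ≤ ‖WithLp.toLp 2 v‖ * ‖WithLp.toLp 2 (M *ᵥ v)‖ := norm_inner_le_norm _ _
    _ ≤ ‖WithLp.toLp 2 v‖ * (‖M‖ * ‖WithLp.toLp 2 v‖) := by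
        gcongr
        exact l2_opNorm_mulVec M _
    _ = ‖M‖ * ‖WithLp.toLp 2 v‖ ^ 2 := by ring

lemma norm_trace_mul_le {ρ : Matrix n n ℂ} (hρ : ρ.PosSemidef) (M : Matrix n n ℂ) :
    ‖(M * ρ).trace‖ ≤ ‖M‖ * ρ.trace.re := by
  obtain ⟨k, v, rfl⟩ := posSemidef_iff_eq_sum_vecMulVec.mp hρ
  have trace_mul_eq :
      (M * ∑ i, vecMulVec (v i) (star (v i))).trace = ∑ i, star (v i) ⬝ᵥ M *ᵥ v i := by
    simp only [Finset.mul_sum, trace_sum, mul_vecMulVec, trace_vecMulVec, dotProduct_comm]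
  have trace_re_eq :
      (∑ i, vecMulVec (v i) (star (v i))).trace.re = ∑ i, ‖WithLp.toLp 2 (v i)‖ ^ 2 := by
    simp only [trace_sum, Complex.re_sum, trace_vecMulVec, ← EuclideanSpace.inner_toLp_toLp]
    exact Finset.sum_congr rfl fun i _ => inner_self_eq_norm_sq (𝕜 := ℂ) _
  rw [trace_mul_eq, trace_re_eq, Finset.mul_sum]
  exact norm_sum_le_of_le _ fun i _ => norm_star_dotProduct_mulVec_le M (v i)

end MatrixNorms

section Fidelity

variable {ι n : Type*} [Fintype ι] [Fintype n]

/-- The unnormalized fidelity `F′(U) = tr(A · Uᴴ Γ(U ρ Uᴴ) U)` of the scrambling matrix `U`, where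
`Γ` is the map with Kraus operators `K`; `U` need not be unitary. -/
def scrambledFidelity (K : ι → Matrix n n ℂ) (ρ A U : Matrix n n ℂ) : ℂ :=
  (A * (Uᴴ * krausMap K (U * ρ * Uᴴ) * U)).trace

lemma scrambledFidelity_eq_trace_mul (K : ι → Matrix n n ℂ) (ρ A U : Matrix n n ℂ) :
    scrambledFidelity K ρ A U = (Uᴴ * krausMap (star K) (U * A * Uᴴ) * U * ρ).trace :=
  calc (A * (Uᴴ * krausMap K (U * ρ * Uᴴ) * U)).trace
      = (U * A * Uᴴ * krausMap K (U * ρ * Uᴴ)).trace := by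
        rw [← mul_assoc, trace_mul_comm]
        simp only [mul_assoc]
    _ = (krausMap (star K) (U * A * Uᴴ) * (U * ρ * Uᴴ)).trace := trace_mul_krausMap ..
    _ = (Uᴴ * krausMap (star K) (U * A * Uᴴ) * U * ρ).trace := by
        rw [← mul_assoc, trace_mul_comm]
        simp only [mul_assoc]

open scoped Matrix.Norms.L2Operator

theorem fidelity_lipschitz_general [DecidableEq n] {K : ι → Matrix n n ℂ}
    (hK : ‖∑ i, (K i)ᴴ * K i‖ ≤ 1) {ρ : Matrix n n ℂ} (hρ : ρ.PosSemidef)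
    (hρtr : ρ.trace.re ≤ 1) {A : Matrix n n ℂ} (hA : ‖A‖ ≤ 1) {U V : Matrix n n ℂ}
    (hU : ‖U‖ ≤ 1) (hV : ‖V‖ ≤ 1) :
    ‖scrambledFidelity K ρ A U - scrambledFidelity K ρ A V‖ ≤ 4 * ‖U - V‖ := by
  have norm_adjoint_one_le : ‖krausMap (star K) 1‖ ≤ 1 := by
    simpa [krausMap_apply, star_eq_conjTranspose] using hK
  have norm_adjoint_le (M : Matrix n n ℂ) : ‖krausMap (star K) M‖ ≤ ‖M‖ :=
    (norm_krausMap_le (star K) M).trans (mul_le_of_le_one_left (norm_nonneg M) norm_adjoint_one_le)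
  rw [scrambledFidelity_eq_trace_mul, scrambledFidelity_eq_trace_mul, ← trace_sub, ← sub_mul]
  calc _ ≤ _ * ρ.trace.re := norm_trace_mul_le hρ _
    _ ≤ _ := mul_le_of_le_one_right (norm_nonneg _) hρtr
    _ ≤ 4 * ‖A‖ * ‖U - V‖ := norm_star_mul_map_mul_sub_le norm_adjoint_le hU hV A
    _ ≤ 4 * 1 * ‖U - V‖ := by gcongr
    _ = 4 * ‖U - V‖ := by ring

end Fidelity

/-- **Lipschitz continuity of the unnormalized fidelity `F′` in the scrambling unitary.**
For a Kraus channel `Γ`, a density matrix `ρ`, and `A` with operator norm `‖A‖ ≤ 1`,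
the map `F′(U) = tr(A · Uᴴ Γ(U ρ Uᴴ) U)` satisfies
`|F′(U) − F′(V)| ≤ 4‖U − V‖_F` for all unitaries `U, V`. -/
theorem fidelity_lipschitz (d : ℕ) (hd : 1 ≤ d)
    (r : ℕ) (K : Fin r → Matrix (Fin d) (Fin d) ℂ)
    (hK : ∑ i, (K i)ᴴ * K i = 1)
    (ρ : Matrix (Fin d) (Fin d) ℂ) (hρ : ρ.PosSemidef) (hρtr : ρ.trace = 1)
    (A : Matrix (Fin d) (Fin d) ℂ)
    (hA : ∀ v : EuclideanSpace ℂ (Fin d), ‖Matrix.toEuclideanLin A v‖ ≤ ‖v‖)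
    (F' : Matrix.unitaryGroup (Fin d) ℂ → ℂ)
    (hF' : F' = fun (U : Matrix.unitaryGroup (Fin d) ℂ) => (A * ((U : Matrix (Fin d) (Fin d) ℂ)ᴴ *
        (∑ i, K i * ((U : Matrix (Fin d) (Fin d) ℂ) * ρ *
          (U : Matrix (Fin d) (Fin d) ℂ)ᴴ) * (K i)ᴴ) *
        (U : Matrix (Fin d) (Fin d) ℂ))).trace) :
    ∀ U V : Matrix.unitaryGroup (Fin d) ℂ,
      ‖F' U - F' V‖ ≤
        4 * frobNorm ((U : Matrix (Fin d) (Fin d) ℂ) - (V : Matrix (Fin d) (Fin d) ℂ)) := by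
  intro U V
  have : NeZero d := ⟨by lia⟩
  open scoped Matrix.Norms.L2Operator in
  calc ‖F' U - F' V‖
      ≤ 4 * ‖(U - V : Matrix (Fin d) (Fin d) ℂ)‖ := by
        simpa only [hF', scrambledFidelity, krausMap_apply, star_eq_conjTranspose] using
          fidelity_lipschitz_general (hK ▸ norm_one.le) hρ (by simp [hρtr])
            (l2_opNorm_le_one_iff.mpr hA) (CStarRing.norm_coe_unitary U).le
            (CStarRing.norm_coe_unitary V).le
    _ ≤ 4 * frobNorm (U - V : Matrix (Fin d) (Fin d) ℂ) := by
        gcongr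
        exact l2_opNorm_le_frobNorm _
end
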